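/- Assume the cocycle f is convolution invertible. For each h ∈ H the maps θ^h_r : M⊗Ā^r → M⊗Ā^r, θ^h_r(m⊗𝐚) = (1#h^{(3)}) m (1#h^{(1)})^{-1} ⊗ 𝐚^{h^{(2)}}, form an endomorphism θ^h_* of the normalized Hochschild chain complex (M⊗Ā^*, b_*). For all h, l ∈ H and all n, the endomorphisms of the Hochschild homology H_n(A,M) induced by θ^h_* ∘ θ^l_* and by θ^{hl}_* coincide, and θ^1_* induces the identity; consequently H_*(A,M) carries a natural structure of left H-module. -/

import Mathlib

open TensorProduct

noncomputable section

namespace HopfCrossed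

variable (k : Type) [CommRing k]

def TpowCat (V : ModuleCat k) : ℕ → ModuleCat k
  | 0 => ModuleCat.of k k
  | n + 1 => ModuleCat.of k (V ⊗[k] (TpowCat V n))

abbrev Tpow (V : Type) [AddCommGroup V] [Module k V] (n : ℕ) : Type :=
  TpowCat k (ModuleCat.of k V) n

def tp {V : Type} [AddCommGroup V] [Module k V] : ∀ {n : ℕ}, (Fin n → V) → Tpow k V n
  | 0, _ => (1 : k)
  | _ + 1, v => (v 0) ⊗ₜ[k] (tp fun i => v i.succ)

section Coalg
variable {H : Type} [AddCommGroup H] [Module k H]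

def itComul [Coalgebra k H] : ∀ n : ℕ, H →ₗ[k] Tpow k H (n + 1)
  | 0 => (TensorProduct.rid k H).symm.toLinearMap
  | n + 1 =>
      (TensorProduct.map LinearMap.id (itComul n)) ∘ₗ (Coalgebra.comul (R := k))

def SRep [Coalgebra k H] (n : ℕ) (h : H) (N : ℕ) (u : Fin N → Fin (n + 1) → H) : Prop :=
  itComul k n h = ∑ i, tp k (u i)

def iterAct {A : Type} [AddCommGroup A] [Module k A]
    (act : H →ₗ[k] A →ₗ[k] A) : ∀ {s : ℕ}, (Fin s → H) → A → A
  | 0, _, a => a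
  | _ + 1, h, a => act (h 0) (iterAct act (fun i => h i.succ) a)

end Coalg

/-- A weak action of a Hopf algebra `H` on a `k`-algebra `A` (Blattner–Cohen–Montgomery,
Doi–Takeuchi), written `act h a = a^h`. -/
structure WeakAction (k A H : Type) [CommRing k] [Ring A] [Algebra k A] [Ring H] [HopfAlgebra k H] : Type where
  act : H →ₗ[k] A →ₗ[k] A
  act_mul : ∀ (h : H) (a b : A) (N : ℕ) (u : Fin N → Fin 2 → H), SRep k 1 h N u →
    act h (a * b) = ∑ i, act (u i 0) a * act (u i 1) b
  act_one : ∀ h : H, act h 1 = Coalgebra.counit (R := k) h • (1 : A)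
  one_act : ∀ a : A, act 1 a = a

variable {A H : Type} [Ring A] [Algebra k A] [Ring H] [HopfAlgebra k H]
variable {k}

/-- Normality of the cocycle `f`. -/
def IsNormal (f : H →ₗ[k] H →ₗ[k] A) : Prop :=
  ∀ h : H, f h 1 = Coalgebra.counit (R := k) h • (1 : A) ∧
    f 1 h = Coalgebra.counit (R := k) h • (1 : A)

/-- The cocycle condition
`f(l⁽¹⁾,m⁽¹⁾)^{h⁽¹⁾} f(h⁽²⁾, l⁽²⁾m⁽²⁾) = f(h⁽¹⁾,l⁽¹⁾) f(h⁽²⁾l⁽²⁾, m)`. -/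
def IsCocycle (W : WeakAction k A H) (f : H →ₗ[k] H →ₗ[k] A) : Prop :=
  ∀ (h l m : H) (N₁ N₂ N₃ : ℕ) (u : Fin N₁ → Fin 2 → H) (v : Fin N₂ → Fin 2 → H)
    (w : Fin N₃ → Fin 2 → H),
    SRep k 1 h N₁ u → SRep k 1 l N₂ v → SRep k 1 m N₃ w →
    (∑ i, ∑ j, ∑ p, W.act (u i 0) (f (v j 0) (w p 0)) * f (u i 1) (v j 1 * w p 1)) =
      ∑ i, ∑ j, f (u i 0) (v j 0) * f (u i 1 * v j 1) m

/-- The twisted module condition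
`(a^{l⁽¹⁾})^{h⁽¹⁾} f(h⁽²⁾,l⁽²⁾) = f(h⁽¹⁾,l⁽¹⁾) a^{h⁽²⁾l⁽²⁾}`. -/
def IsTwistedModule (W : WeakAction k A H) (f : H →ₗ[k] H →ₗ[k] A) : Prop :=
  ∀ (h l : H) (a : A) (N₁ N₂ : ℕ) (u : Fin N₁ → Fin 2 → H) (v : Fin N₂ → Fin 2 → H),
    SRep k 1 h N₁ u → SRep k 1 l N₂ v →
    (∑ i, ∑ j, W.act (u i 0) (W.act (v j 0) a) * f (u i 1) (v j 1)) =
      ∑ i, ∑ j, f (u i 0) (v j 0) * W.act (u i 1 * v j 1) a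

variable (k A H) in
/-- A crossed product `E = A #_f H` of `A` by `H`:  a ring `E` identified with `A ⊗ H`
as a `k`-module, whose multiplication is given by the crossed product formula
`(a # h)(b # l) = a b^{h⁽¹⁾} f(h⁽²⁾,l⁽¹⁾) # h⁽³⁾ l⁽²⁾`. -/
structure CrossedProduct (E : Type) [Ring E] [Algebra k E] extends WeakAction k A H where
  f : H →ₗ[k] H →ₗ[k] A
  ι : (A ⊗[k] H) ≃ₗ[k] E
  ι_one : ι (1 ⊗ₜ[k] 1) = 1
  ι_mul : ∀ (a b : A) (h l : H) (N M : ℕ) (u : Fin N → Fin 3 → H) (v : Fin M → Fin 2 → H),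
    SRep k 2 h N u → SRep k 1 l M v →
    ι (a ⊗ₜ[k] h) * ι (b ⊗ₜ[k] l) =
      ∑ i, ∑ j, ι ((a * act (u i 0) b * f (u i 1) (v j 0)) ⊗ₜ[k] (u i 2 * v j 1))
  f_normal : IsNormal f
  f_cocycle : IsCocycle toWeakAction f
  f_twisted : IsTwistedModule toWeakAction f

namespace CrossedProduct

variable {E : Type} [Ring E] [Algebra k E] (S : CrossedProduct k A H E)

/-- The canonical map `A → E`, `a ↦ a # 1`. -/
def aE : A →ₗ[k] E := S.ι.toLinearMap ∘ₗ (TensorProduct.mk k A H).flip 1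

/-- The canonical map `H → E`, `h ↦ 1 # h`. -/
def hE : H →ₗ[k] E := S.ι.toLinearMap ∘ₗ (TensorProduct.mk k A H) 1

end CrossedProduct


section Hochschild

variable (k) in
/-- For a `k`-algebra `B`, the submodule `k·1 ⊆ B`. -/
abbrev unitSub (B : Type) [Ring B] [Algebra k B] : Submodule k B :=
  LinearMap.range (Algebra.linearMap k B)

variable (k) in
/-- `B̄ = B/k`. -/
abbrev Qbar (B : Type) [Ring B] [Algebra k B] : Type := B ⧸ unitSub k B

variable (k) in
/-- The canonical projection `B → B̄`. -/
abbrev qbar (B : Type) [Ring B] [Algebra k B] : B →ₗ[k] Qbar k B :=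
  (unitSub k B).mkQ

/-- A `B`-bimodule structure (with commuting `k`-linear left and right actions)
on a `k`-module `M`. -/
structure Bimod (k B M : Type) [CommRing k] [Ring B] [Algebra k B]
    [AddCommGroup M] [Module k M] : Type where
  l : B →ₗ[k] M →ₗ[k] M
  r : B →ₗ[k] M →ₗ[k] M
  l_one : l 1 = LinearMap.id
  r_one : r 1 = LinearMap.id
  l_mul : ∀ x y : B, l (x * y) = l x ∘ₗ l y
  r_mul : ∀ x y : B, r (x * y) = r y ∘ₗ r x
  lr_comm : ∀ x y : B, l x ∘ₗ r y = r y ∘ₗ l x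

/-- Replace the `r`-tuple `a` by the `(r-1)`-tuple obtained by multiplying the
`i`-th and `(i+1)`-st entries. -/
def mulAt {A : Type} [Mul A] {r : ℕ} (a : Fin (r + 1) → A) (i : Fin r) (j : Fin r) : A :=
  if (j : ℕ) < (i : ℕ) then a j.castSucc
  else if (j : ℕ) = (i : ℕ) then a j.castSucc * a j.succ else a j.succ

variable (k) in
/-- The degree-`n` part `M ⊗ B̄^{⊗n}` of the normalized Hochschild chain complex. -/
abbrev HCh (B M : Type) [Ring B] [Algebra k B] [AddCommGroup M] [Module k M]
    (n : ℕ) : Type :=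
  M ⊗[k] Tpow k (Qbar k B) n

variable (k) in
/-- `IsHochschildD l r bd` says that `bd` is the differential of the normalized
Hochschild chain complex of `B` with coefficients in the bimodule `M` (with left
action `l` and right action `r`):
`b(m ⊗ x₁ ⊗ ⋯ ⊗ xₙ) = m x₁ ⊗ x₂ ⊗ ⋯ + ∑ (-1)^i m ⊗ ⋯ ⊗ xᵢxᵢ₊₁ ⊗ ⋯ + (-1)^n xₙ m ⊗ x₁ ⊗ ⋯ ⊗ xₙ₋₁`. -/
def IsHochschildD {B M : Type} [Ring B] [Algebra k B] [AddCommGroup M] [Module k M]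
    (l r : B →ₗ[k] M →ₗ[k] M)
    (bd : ∀ n : ℕ, HCh k B M (n + 1) →ₗ[k] HCh k B M n) : Prop :=
  ∀ (n : ℕ) (m : M) (x : Fin (n + 1) → B),
    bd n (m ⊗ₜ[k] tp k (fun i => qbar k B (x i))) =
      r (x 0) m ⊗ₜ[k] tp k (fun i : Fin n => qbar k B (x i.succ))
      + (∑ i : Fin n, ((-1 : ℤ) ^ ((i : ℕ) + 1)) •
          (m ⊗ₜ[k] tp k (fun j => qbar k B (mulAt x i j))))
      + ((-1 : ℤ) ^ (n + 1)) •
          (l (x (Fin.last n)) m ⊗ₜ[k] tp k (fun i : Fin n => qbar k B (x i.castSucc)))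

variable (k) in
/-- The homology of a (not necessarily everywhere-defined) chain complex
`⋯ → C (n+1) → C n → ⋯ → C 0`; in degree `n+1` it is `ker (d n) / im (d (n+1))`, and in
degree `0` it is `C 0 / im (d 0)`. -/
def Hml {C : ℕ → Type} [∀ n, AddCommGroup (C n)] [∀ n, Module k (C n)]
    (d : ∀ n : ℕ, C (n + 1) →ₗ[k] C n) : ℕ → Type
  | 0 => C 0 ⧸ LinearMap.range (d 0)
  | n + 1 => LinearMap.ker (d n) ⧸
      (LinearMap.range (d (n + 1))).comap (LinearMap.ker (d n)).subtype

instance {C : ℕ → Type} [∀ n, AddCommGroup (C n)] [∀ n, Module k (C n)]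
    (d : ∀ n : ℕ, C (n + 1) →ₗ[k] C n) : ∀ n, AddCommGroup (Hml k d n)
  | 0 => inferInstanceAs (AddCommGroup (C 0 ⧸ LinearMap.range (d 0)))
  | n + 1 => inferInstanceAs (AddCommGroup (LinearMap.ker (d n) ⧸
      (LinearMap.range (d (n + 1))).comap (LinearMap.ker (d n)).subtype))

instance {C : ℕ → Type} [∀ n, AddCommGroup (C n)] [∀ n, Module k (C n)]
    (d : ∀ n : ℕ, C (n + 1) →ₗ[k] C n) : ∀ n, Module k (Hml k d n)
  | 0 => inferInstanceAs (Module k (C 0 ⧸ LinearMap.range (d 0)))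
  | n + 1 => inferInstanceAs (Module k (LinearMap.ker (d n) ⧸
      (LinearMap.range (d (n + 1))).comap (LinearMap.ker (d n)).subtype))

end Hochschild

section Statement10

variable {k A H E M : Type} [CommRing k] [Ring A] [Algebra k A] [Ring H] [HopfAlgebra k H]
  [Ring E] [Algebra k E] [AddCommGroup M] [Module k M]

/-- `IsConvInverse f g` : `g` is the convolution inverse of `f` in `Hom_k(H ⊗ H, A)`. -/
def IsConvInverse (f g : H →ₗ[k] H →ₗ[k] A) : Prop :=
  ∀ (h l : H) (N M' : ℕ) (u : Fin N → Fin 2 → H) (v : Fin M' → Fin 2 → H),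
    SRep k 1 h N u → SRep k 1 l M' v →
    (∑ i, ∑ j, f (u i 0) (v j 0) * g (u i 1) (v j 1)) =
        (Coalgebra.counit (R := k) h * Coalgebra.counit (R := k) l) • (1 : A) ∧
    (∑ i, ∑ j, g (u i 0) (v j 0) * f (u i 1) (v j 1)) =
        (Coalgebra.counit (R := k) h * Coalgebra.counit (R := k) l) • (1 : A)

/-- `IsTheta S Bi finv θ` : for each `h ∈ H`, `θ h` is the family of maps
`θ^h_r : M ⊗ Ā^r → M ⊗ Ā^r` given by
`θ^h_r(m ⊗ 𝐚) = (1 # h⁽³⁾) m (1 # h⁽¹⁾)⁻¹ ⊗ 𝐚^{h⁽²⁾}`, where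
`(1 # x)⁻¹ = f⁻¹(S(x⁽²⁾), x⁽³⁾) # S(x⁽¹⁾)` and `h⁽²⁾` acts componentwise on `𝐚`. -/
def IsTheta (S : CrossedProduct k A H E) (Bi : Bimod k E M)
    (finv : H →ₗ[k] H →ₗ[k] A)
    (θ : H → ∀ r : ℕ, HCh k A M r →ₗ[k] HCh k A M r) : Prop :=
  ∀ (h : H) (r : ℕ) (m : M) (a : Fin r → A) (N : ℕ) (u : Fin N → Fin (r + 4) → H),
    SRep k (r + 3) h N u →
    θ h r (m ⊗ₜ[k] tp k (fun j => qbar k A (a j))) =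
      ∑ i, (Bi.l (S.hE (u i (Fin.last (r + 3))))
          (Bi.r (S.ι ((finv (HopfAlgebra.antipode (R := k) (u i 1)) (u i 2)) ⊗ₜ[k]
            HopfAlgebra.antipode (R := k) (u i 0))) m)) ⊗ₜ[k]
        tp k (fun j : Fin r => qbar k A (S.act (u i ⟨(j : ℕ) + 3, by omega⟩) (a j)))

/-!
Let `γ = 1 # h`, viewed as a convolution invertible map `H → E`. If the chain `m ⊗ a₁ ⊗ ⋯ ⊗ aₙ` is
thought of as the word `t a₁ t ⋯ aₙ t` with coefficient `m`, then `θ^h` conjugates the coefficient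
by `γ` while `h` acts on the word. Since `γ a = a^h γ` in the convolution algebra, every
face of the Hochschild boundary is preserved, so `θ^h` is a chain map.

Over `H ⊗ H` the conjugating maps of `θ^h ∘ θ^l` and `θ^{hl}` differ by the cocycle `f`, which
satisfies the twisted module condition `(a^l)^h f(h, l) = f(h, l) a^{hl}`. Inserting `f` between the
letters of a word, the letters to its left carrying `(a^l)^h` and those to its right `a^{hl}`, gives
a prism whose inner faces cancel because of this condition, and whose two end faces are
`θ^h ∘ θ^l` and `θ^{hl}`.
-/

open WithConv

section TensorPower

variable {V X : Type} [AddCommGroup V] [Module k V] [AddCommGroup X] [Module k X]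

variable (k V) in
/-- The defining identification `V^{⊗0} = k`, as a linear equivalence: `TpowCat` hides it from the
elaborator. -/
def tpowZeroEquiv : k ≃ₗ[k] Tpow k V 0 := LinearEquiv.refl k k

variable (k V) in
/-- The defining identification `V^{⊗(n+1)} = V ⊗ V^{⊗n}`, as a linear equivalence: `TpowCat` hides
it from the elaborator. -/
def tpowConsEquiv (n : ℕ) : V ⊗[k] Tpow k V n ≃ₗ[k] Tpow k V (n + 1) :=
  LinearEquiv.refl k (V ⊗[k] Tpow k V n)

lemma tp_zero (v : Fin 0 → V) : tp k v = tpowZeroEquiv k V 1 := rfl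

lemma tp_succ {n : ℕ} (v : Fin (n + 1) → V) :
    tp k v = tpowConsEquiv k V n (v 0 ⊗ₜ[k] tp k (fun i => v i.succ)) := rfl

lemma tp_cons {n : ℕ} (x : V) (v : Fin n → V) :
    tp k (Fin.cons x v : Fin (n + 1) → V) = tpowConsEquiv k V n (x ⊗ₜ[k] tp k v) := rfl

lemma tpow_hom_ext {W : Type} {q : W → V} (hq : Function.Surjective q) {n : ℕ}
    {f g : Tpow k V n →ₗ[k] X}
    (h : ∀ a : Fin n → W, f (tp k (fun i => q (a i))) = g (tp k (fun i => q (a i)))) : f = g := by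
  induction n generalizing X with
  | zero =>
    rw [← LinearMap.cancel_right (tpowZeroEquiv k V).surjective]
    exact LinearMap.ext_ring (h Fin.elim0)
  | succ n ih =>
    rw [← LinearMap.cancel_right (tpowConsEquiv k V n).surjective]
    refine TensorProduct.ext (LinearMap.ext fun v => ?_)
    obtain ⟨v, rfl⟩ := hq v
    exact ih fun a => h (Fin.cons v a)

lemma span_range_tp (n : ℕ) : Submodule.span k (Set.range (tp k (V := V) (n := n))) = ⊤ := by
  rw [← Submodule.ker_mkQ (Submodule.span k _), LinearMap.ker_eq_top]
  refine tpow_hom_ext Function.surjective_id fun a => ?_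
  rw [LinearMap.zero_apply, Submodule.mkQ_apply, Submodule.Quotient.mk_eq_zero]
  exact Submodule.subset_span ⟨a, rfl⟩

lemma smul_tp_cons {n : ℕ} (c : k) (u : Fin (n + 1) → V) :
    c • tp k u = tp k (Fin.cons (c • u 0) (fun i => u i.succ) : Fin (n + 1) → V) := by
  rw [tp_cons, tp_succ, ← map_smul, TensorProduct.smul_tmul']

lemma exists_eq_sum_tp {n : ℕ} (x : Tpow k V (n + 1)) :
    ∃ (N : ℕ) (u : Fin N → Fin (n + 1) → V), x = ∑ i, tp k (u i) := by
  have hx : x ∈ Submodule.span k (Set.range (tp k (V := V) (n := n + 1))) := by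
    rw [span_range_tp]; trivial
  induction hx using Submodule.span_induction with
  | mem x hx => obtain ⟨u, rfl⟩ := hx; exact ⟨1, fun _ => u, by simp⟩
  | zero => exact ⟨0, Fin.elim0, by simp⟩
  | add x y _ _ hx hy =>
    obtain ⟨N, u, rfl⟩ := hx
    obtain ⟨N', u', rfl⟩ := hy
    exact ⟨N + N', Fin.append u u', by simp [Fin.sum_univ_add]⟩
  | smul c x _ hx =>
    obtain ⟨N, u, rfl⟩ := hx
    exact ⟨N, fun i => Fin.cons (c • u i 0) fun j => u i j.succ,
      by simp only [Finset.smul_sum, smul_tp_cons]⟩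

/-- The linear map `v ⊗ w ↦ f v * g w` on `V^{⊗(n+1)} = V ⊗ V^{⊗n}`, the recursion step of all
maps out of tensor powers below. -/
def tpowConsLift {B : Type} [Ring B] [Algebra k B] {n : ℕ} (f : V →ₗ[k] B)
    (g : Tpow k V n →ₗ[k] B) : Tpow k V (n + 1) →ₗ[k] B :=
  LinearMap.mul' k B ∘ₗ TensorProduct.map f g ∘ₗ (tpowConsEquiv k V n).symm.toLinearMap

lemma tpowConsLift_tp {B : Type} [Ring B] [Algebra k B] {n : ℕ} (f : V →ₗ[k] B)
    (g : Tpow k V n →ₗ[k] B) (v : Fin (n + 1) → V) :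
    tpowConsLift f g (tp k v) = f (v 0) * g (tp k fun i => v i.succ) := by
  simp [tpowConsLift, tp_succ]

end TensorPower

section Convolution

variable {C D B B' : Type} [AddCommGroup C] [Module k C] [AddCommGroup D] [Module k D]
  [Ring B] [Algebra k B] [Ring B'] [Algebra k B']

lemma conv_ext {F G : WithConv (C →ₗ[k] B)} (h : ∀ c, F c = G c) : F = G :=
  WithConv.ext (LinearMap.ext h)

lemma conv_tmul_ext {F G : WithConv (C ⊗[k] D →ₗ[k] B)} (h : ∀ c d, F (c ⊗ₜ d) = G (c ⊗ₜ d)) :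
    F = G :=
  WithConv.ext (TensorProduct.ext' h)

lemma conv_sub_apply (F G : WithConv (C →ₗ[k] B)) (c : C) : (F - G) c = F c - G c := rfl

/-- The linear map `c₁ ⊗ ⋯ ⊗ cₙ ↦ F₁(c₁)⋯Fₙ(cₙ)`. -/
def tpowProd : ∀ {n : ℕ}, (Fin n → WithConv (C →ₗ[k] B)) → Tpow k C n →ₗ[k] B
  | 0, _ => Algebra.linearMap k B ∘ₗ (tpowZeroEquiv k C).symm.toLinearMap
  | _ + 1, F => tpowConsLift (F 0).ofConv (tpowProd fun i => F i.succ)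

lemma tpowProd_tp {n : ℕ} (F : Fin n → WithConv (C →ₗ[k] B)) (v : Fin n → C) :
    tpowProd F (tp k v) = (List.ofFn fun i => F i (v i)).prod := by
  induction n with
  | zero => simp [tpowProd, tp_zero]
  | succ n ih => simp [tpowProd, tpowConsLift_tp, ih, List.ofFn_succ]

variable [Coalgebra k C] [Coalgebra k D]

lemma counit_smulRight_convMul_apply (b : B) (F : WithConv (C →ₗ[k] B)) (c : C) :
    ((toConv ((Coalgebra.counit (R := k)).smulRight b) : WithConv (C →ₗ[k] B)) * F) c =
      b * F c := by
  conv_rhs => rw [← one_mul F]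
  simp only [(Coalgebra.Repr.arbitrary k c).convMul_apply, Finset.mul_sum]
  simp [Algebra.algebraMap_eq_smul_one]

lemma convMul_counit_smulRight_apply (b : B) (F : WithConv (C →ₗ[k] B)) (c : C) :
    (F * (toConv ((Coalgebra.counit (R := k)).smulRight b) : WithConv (C →ₗ[k] B))) c =
      F c * b := by
  conv_rhs => rw [← mul_one F]
  simp only [(Coalgebra.Repr.arbitrary k c).convMul_apply, Finset.sum_mul]
  simp [Algebra.algebraMap_eq_smul_one]

variable (k C) in
/-- The algebra embedding `b ↦ (c ↦ ε(c) b)` of `B` as constants of the convolution algebra. -/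
def convConst : B →ₐ[k] WithConv (C →ₗ[k] B) where
  toFun b := toConv ((Coalgebra.counit (R := k)).smulRight b)
  map_one' := conv_ext fun c => by simp [Algebra.algebraMap_eq_smul_one]
  map_mul' a b := conv_ext fun c => by
    rw [counit_smulRight_convMul_apply]; simp
  map_zero' := conv_ext fun c => by simp
  map_add' a b := conv_ext fun c => by simp
  commutes' r := conv_ext fun _ => by
    simpa [Algebra.algebraMap_eq_smul_one] using smul_comm _ _ _

lemma convConst_apply (b : B) (c : C) :
    convConst k C b c = Coalgebra.counit (R := k) c • b := rfl

lemma convConst_mul_apply (b : B) (F : WithConv (C →ₗ[k] B)) (c : C) :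
    (convConst k C b * F) c = b * F c := counit_smulRight_convMul_apply b F c

lemma mul_convConst_apply (b : B) (F : WithConv (C →ₗ[k] B)) (c : C) :
    (F * convConst k C b) c = F c * b := convMul_counit_smulRight_apply b F c

variable (C) in
/-- Postcomposition with an algebra map, as a homomorphism of convolution algebras. -/
def convPostcomp (φ : B →ₐ[k] B') : WithConv (C →ₗ[k] B) →ₐ[k] WithConv (C →ₗ[k] B') where
  toFun F := toConv (φ.toLinearMap ∘ₗ F.ofConv)
  map_one' := conv_ext fun c => by simp
  map_mul' F G := congrArg toConv (LinearMap.algHom_comp_convMul_distrib φ F G)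
  map_zero' := conv_ext fun c => by simp
  map_add' F G := conv_ext fun c => by simp
  commutes' r := conv_ext fun c => by simp [LinearMap.convAlgebraMap_apply]

@[simp] lemma convPostcomp_apply (φ : B →ₐ[k] B') (F : WithConv (C →ₗ[k] B)) (c : C) :
    convPostcomp C φ F c = φ (F c) := rfl

lemma convPostcomp_convConst (φ : B →ₐ[k] B') (b : B) :
    convPostcomp C φ (convConst k C b) = convConst k C (φ b) :=
  conv_ext fun c => by simp [convConst_apply]

/-- Precomposition with a coalgebra map, as a homomorphism of convolution algebras. -/
def convPrecomp (φ : D →ₗc[k] C) : WithConv (C →ₗ[k] B) →ₐ[k] WithConv (D →ₗ[k] B) where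
  toFun F := toConv (F.ofConv ∘ₗ φ.toLinearMap)
  map_one' := conv_ext fun c => by simp
  map_mul' F G := congrArg toConv (LinearMap.convMul_comp_coalgHom_distrib F G φ)
  map_zero' := conv_ext fun _ => by simp
  map_add' F G := conv_ext fun c => by simp
  commutes' r := conv_ext fun c => by simp [LinearMap.convAlgebraMap_apply]

@[simp] lemma convPrecomp_apply (φ : D →ₗc[k] C) (F : WithConv (C →ₗ[k] B)) (d : D) :
    convPrecomp φ F d = F (φ d) := rfl

lemma convPrecomp_convConst (φ : D →ₗc[k] C) (b : B) :
    convPrecomp φ (convConst k C b) = convConst k D b :=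
  conv_ext fun c => by simp [convConst_apply]

lemma convPostcomp_convPrecomp (φ : B →ₐ[k] B') (ψ : D →ₗc[k] C) (F : WithConv (C →ₗ[k] B)) :
    convPostcomp D φ (convPrecomp ψ F) = convPrecomp ψ (convPostcomp C φ F) := rfl

lemma itComul_zero (c : C) : itComul k 0 c = tpowConsEquiv k C 0 (c ⊗ₜ tpowZeroEquiv k C 1) := rfl

lemma itComul_succ (n : ℕ) (c : C) :
    itComul k (n + 1) c = tpowConsEquiv k C (n + 1)
      (TensorProduct.map LinearMap.id (itComul k n) (Coalgebra.comul (R := k) c)) := rfl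

lemma tpowConsLift_itComul_succ {n : ℕ} (f : C →ₗ[k] B) (g : Tpow k C (n + 1) →ₗ[k] B) (c : C) :
    tpowConsLift f g (itComul k (n + 1) c) = (toConv f * toConv (g ∘ₗ itComul k n)) c := by
  simp [tpowConsLift, itComul_succ, TensorProduct.map_map]

lemma exists_SRep (n : ℕ) (c : C) : ∃ N u, SRep k n c N u := exists_eq_sum_tp _

lemma tpowProd_itComul {n : ℕ} (F : Fin (n + 1) → WithConv (C →ₗ[k] B)) (c : C) :
    tpowProd F (itComul k n c) = (List.ofFn F).prod c := by
  induction n generalizing c with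
  | zero => simp [tpowProd, tpowConsLift, itComul_zero]
  | succ n ih =>
    have hF : toConv (tpowProd (fun i => F i.succ) ∘ₗ itComul k n) =
        (List.ofFn fun i => F i.succ).prod := conv_ext fun c => ih (fun i => F i.succ) c
    rw [tpowProd, tpowConsLift_itComul_succ, hF, List.ofFn_succ (f := F), List.prod_cons]

variable {ι : Type} [Fintype ι]

lemma convProd_apply {n : ℕ} {c : C} {u : ι → Fin (n + 1) → C}
    (hu : itComul k n c = ∑ i, tp k (u i)) (F : Fin (n + 1) → WithConv (C →ₗ[k] B)) :
    (List.ofFn F).prod c = ∑ i, (List.ofFn fun j => F j (u i j)).prod := by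
  rw [← tpowProd_itComul, hu, map_sum]
  simp only [tpowProd_tp]

lemma convMul_apply {c : C} {u : ι → Fin 2 → C} (hu : itComul k 1 c = ∑ i, tp k (u i))
    (F G : WithConv (C →ₗ[k] B)) : (F * G) c = ∑ i, F (u i 0) * G (u i 1) := by
  simpa [List.ofFn_succ] using convProd_apply hu ![F, G]

lemma convMul_mul_apply {c : C} {u : ι → Fin 3 → C} (hu : itComul k 2 c = ∑ i, tp k (u i))
    (F G K : WithConv (C →ₗ[k] B)) :
    (F * (G * K)) c = ∑ i, F (u i 0) * (G (u i 1) * K (u i 2)) := by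
  simpa [List.ofFn_succ] using convProd_apply hu ![F, G, K]

end Convolution

section TensorCoalgebra

variable {C D : Type} [AddCommGroup C] [Module k C] [AddCommGroup D] [Module k D]

variable (k C D) in
/-- The shuffle `(c₁ ⊗ ⋯ ⊗ cₙ) ⊗ (d₁ ⊗ ⋯ ⊗ dₙ) ↦ (c₁ ⊗ d₁) ⊗ ⋯ ⊗ (cₙ ⊗ dₙ)`. -/
def tpowMerge : ∀ n : ℕ, Tpow k C n ⊗[k] Tpow k D n →ₗ[k] Tpow k (C ⊗[k] D) n
  | 0 => (tpowZeroEquiv k (C ⊗[k] D)).toLinearMap ∘ₗ LinearMap.mul' k k ∘ₗ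
      TensorProduct.map (tpowZeroEquiv k C).symm.toLinearMap (tpowZeroEquiv k D).symm.toLinearMap
  | n + 1 => (tpowConsEquiv k (C ⊗[k] D) n).toLinearMap ∘ₗ
      TensorProduct.map LinearMap.id (tpowMerge n) ∘ₗ
      (TensorProduct.tensorTensorTensorComm k C (Tpow k C n) D (Tpow k D n)).toLinearMap ∘ₗ
      TensorProduct.map (tpowConsEquiv k C n).symm.toLinearMap
        (tpowConsEquiv k D n).symm.toLinearMap

lemma tpowMerge_cons (n : ℕ) (c : C) (d : D) (v : Tpow k C n) (w : Tpow k D n) :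
    tpowMerge k C D (n + 1) (tpowConsEquiv k C n (c ⊗ₜ v) ⊗ₜ tpowConsEquiv k D n (d ⊗ₜ w)) =
      tpowConsEquiv k (C ⊗[k] D) n ((c ⊗ₜ d) ⊗ₜ tpowMerge k C D n (v ⊗ₜ w)) := by
  simp [tpowMerge]

lemma tpowMerge_tp {n : ℕ} (u : Fin n → C) (v : Fin n → D) :
    tpowMerge k C D n (tp k u ⊗ₜ tp k v) = tp k fun j => u j ⊗ₜ[k] v j := by
  induction n with
  | zero => simp [tpowMerge, tp_zero]
  | succ n ih => simp only [tp_succ, tpowMerge_cons, ih]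

variable [Coalgebra k C] [Coalgebra k D]

lemma tpowMerge_itComul (n : ℕ) (c : C) (d : D) :
    tpowMerge k C D (n + 1) (itComul k n c ⊗ₜ itComul k n d) = itComul k n (c ⊗ₜ[k] d) := by
  induction n generalizing c d with
  | zero => simp [itComul_zero, tpowMerge]
  | succ n ih =>
    simp only [itComul_succ, ← (Coalgebra.Repr.arbitrary k c).eq,
      ← (Coalgebra.Repr.arbitrary k d).eq, TensorProduct.comul_tmul, map_sum,
      TensorProduct.sum_tmul, TensorProduct.tmul_sum, TensorProduct.map_tmul, LinearMap.id_coe,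
      id_eq, tpowMerge_cons, ih]
    simp

lemma itComul_tmul_eq_sum {n : ℕ} {ι κ : Type} [Fintype ι] [Fintype κ] {c : C} {d : D}
    {u : ι → Fin (n + 1) → C} {v : κ → Fin (n + 1) → D}
    (hu : itComul k n c = ∑ i, tp k (u i)) (hv : itComul k n d = ∑ j, tp k (v j)) :
    itComul k n (c ⊗ₜ[k] d) = ∑ p : ι × κ, tp k fun j => u p.1 j ⊗ₜ[k] v p.2 j := by
  simp only [← tpowMerge_itComul, hu, hv, TensorProduct.sum_tmul, TensorProduct.tmul_sum, map_sum,
    tpowMerge_tp, Fintype.sum_prod_type]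
  exact Finset.sum_comm

end TensorCoalgebra

section HopfAlgebra

open Algebra.TensorProduct

variable {C B B' : Type} [Ring C] [Bialgebra k C] [Ring B] [Algebra k B] [Ring B'] [Algebra k B']

variable (k C) in
/-- The identity as an element of the convolution ring of endomorphisms. -/
abbrev convId : WithConv (C →ₗ[k] C) := toConv LinearMap.id

variable (k H) in
/-- The antipode as an element of the convolution ring of endomorphisms. -/
abbrev convAntipode : WithConv (H →ₗ[k] H) := toConv (HopfAlgebra.antipode k)

lemma convAntipode_mul_convId : convAntipode k H * convId k H = 1 := LinearMap.antipode_mul_id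

lemma convId_mul_convAntipode : convId k H * convAntipode k H = 1 := LinearMap.id_mul_antipode

lemma toConv_map_comp_comul (F : WithConv (C →ₗ[k] B)) (G : WithConv (C →ₗ[k] B')) :
    toConv (TensorProduct.map F.ofConv G.ofConv ∘ₗ Coalgebra.comul) =
      convPostcomp C includeLeft F * convPostcomp C includeRight G :=
  conv_ext fun c => by
    conv_lhs => simp only [← (Coalgebra.Repr.arbitrary k c).eq, LinearMap.comp_apply, map_sum]
    simp [(Coalgebra.Repr.arbitrary k c).convMul_apply]

lemma toConv_comul : toConv Coalgebra.comul =
    convPostcomp C includeLeft (convId k C) * convPostcomp C includeRight (convId k C) := by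
  rw [← toConv_map_comp_comul]; simp

lemma toConv_comul_comp_antipode :
    toConv (Coalgebra.comul ∘ₗ HopfAlgebra.antipode k (A := H)) =
      convPostcomp H includeRight (convAntipode k H) *
        convPostcomp H includeLeft (convAntipode k H) := by
  refine (left_inv_eq_right_inv (a := toConv (Coalgebra.comul (R := k) (A := H))) ?_
    LinearMap.comul_right_inv).symm
  rw [toConv_comul, mul_assoc, ← mul_assoc (convPostcomp H includeLeft (convAntipode k H)),
    ← map_mul, convAntipode_mul_convId, map_one, one_mul, ← map_mul, convAntipode_mul_convId,
    map_one]

variable (k C) in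
/-- The algebra map `a ⊗ b ↦ (a ⊗ 1) ⊗ (b ⊗ 1)`. -/
def tensorMapLeft : C ⊗[k] C →ₐ[k] (C ⊗[k] C) ⊗[k] (C ⊗[k] C) :=
  Algebra.TensorProduct.map includeLeft includeLeft

variable (k C) in
/-- The algebra map `a ⊗ b ↦ (1 ⊗ a) ⊗ (1 ⊗ b)`. -/
def tensorMapRight : C ⊗[k] C →ₐ[k] (C ⊗[k] C) ⊗[k] (C ⊗[k] C) :=
  Algebra.TensorProduct.map includeRight includeRight

@[simp] lemma tensorMapLeft_tmul (a b : C) :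
    tensorMapLeft k C (a ⊗ₜ b) = (a ⊗ₜ 1) ⊗ₜ (b ⊗ₜ 1) := rfl

@[simp] lemma tensorMapRight_tmul (a b : C) :
    tensorMapRight k C (a ⊗ₜ b) = (1 ⊗ₜ a) ⊗ₜ (1 ⊗ₜ b) := rfl

lemma comulAlgHom_comp_includeLeft :
    (Bialgebra.comulAlgHom k (C ⊗[k] C)).comp includeLeft =
      (tensorMapLeft k C).comp (Bialgebra.comulAlgHom k C) := by
  ext x
  have hx := (Coalgebra.Repr.arbitrary k x).eq
  simp [TensorProduct.comul_tmul, ← hx, TensorProduct.sum_tmul, one_def]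

lemma comulAlgHom_comp_includeRight :
    (Bialgebra.comulAlgHom k (C ⊗[k] C)).comp includeRight =
      (tensorMapRight k C).comp (Bialgebra.comulAlgHom k C) := by
  ext x
  have hx := (Coalgebra.Repr.arbitrary k x).eq
  simp [TensorProduct.comul_tmul, ← hx, TensorProduct.tmul_sum, one_def]

lemma toConv_comul_comp_map_comul (F G : WithConv (C →ₗ[k] C)) :
    toConv (Coalgebra.comul ∘ₗ TensorProduct.map F.ofConv G.ofConv ∘ₗ Coalgebra.comul) =
      convPostcomp C (tensorMapLeft k C)
          (toConv (Coalgebra.comul ∘ₗ F.ofConv)) *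
        convPostcomp C (tensorMapRight k C)
          (toConv (Coalgebra.comul ∘ₗ G.ofConv)) := by
  have hcomul :=
    congrArg (convPostcomp C (Bialgebra.comulAlgHom k (C ⊗[k] C))) (toConv_map_comp_comul F G)
  rw [map_mul] at hcomul
  refine hcomul.trans ?_
  congr 1
  · exact conv_ext fun c => DFunLike.congr_fun comulAlgHom_comp_includeLeft (F c)
  · exact conv_ext fun c => DFunLike.congr_fun comulAlgHom_comp_includeRight (G c)

variable {ι : Type} [Fintype ι] {h : H} {u : ι → Fin 4 → H}

lemma comul_map_antipode_id_comul (hu : itComul k 3 h = ∑ i, tp k (u i)) :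
    Coalgebra.comul (R := k) (TensorProduct.map (HopfAlgebra.antipode k) LinearMap.id
        (Coalgebra.comul (R := k) h)) =
      ∑ i, (HopfAlgebra.antipode k (u i 1) ⊗ₜ[k] u i 2) ⊗ₜ[k]
        (HopfAlgebra.antipode k (u i 0) ⊗ₜ[k] u i 3) := by
  have hS := toConv_comul_comp_map_comul (convAntipode k H) (convId k H)
  rw [toConv_comul_comp_antipode, LinearMap.comp_id, toConv_comul, map_mul, map_mul,
    mul_assoc] at hS
  refine (congrArg (fun F => F h) hS).trans ?_
  simpa [List.ofFn_succ, one_def] using convProd_apply hu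
    ![convPostcomp H (tensorMapLeft k H)
        (convPostcomp H includeRight (convAntipode k H)),
      convPostcomp H (tensorMapLeft k H)
        (convPostcomp H includeLeft (convAntipode k H)),
      convPostcomp H (tensorMapRight k H)
        (convPostcomp H includeLeft (convId k H)),
      convPostcomp H (tensorMapRight k H)
        (convPostcomp H includeRight (convId k H))]

lemma comul_map_id_antipode_comul (hu : itComul k 3 h = ∑ i, tp k (u i)) :
    Coalgebra.comul (R := k) (TensorProduct.map LinearMap.id (HopfAlgebra.antipode k)
        (Coalgebra.comul (R := k) h)) =
      ∑ i, (u i 0 ⊗ₜ[k] HopfAlgebra.antipode k (u i 3)) ⊗ₜ[k]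
        (u i 1 ⊗ₜ[k] HopfAlgebra.antipode k (u i 2)) := by
  have hS := toConv_comul_comp_map_comul (convId k H) (convAntipode k H)
  rw [toConv_comul_comp_antipode, LinearMap.comp_id, toConv_comul, map_mul, map_mul,
    mul_assoc] at hS
  refine (congrArg (fun F => F h) hS).trans ?_
  simpa [List.ofFn_succ, one_def] using convProd_apply hu
    ![convPostcomp H (tensorMapLeft k H)
        (convPostcomp H includeLeft (convId k H)),
      convPostcomp H (tensorMapLeft k H)
        (convPostcomp H includeRight (convId k H)),
      convPostcomp H (tensorMapRight k H)
        (convPostcomp H includeRight (convAntipode k H)),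
      convPostcomp H (tensorMapRight k H)
        (convPostcomp H includeLeft (convAntipode k H))]

lemma sum_tmul_antipode_tmul_mul_antipode (hu : itComul k 3 h = ∑ i, tp k (u i)) :
    ∑ i, (u i 0 ⊗ₜ[k] HopfAlgebra.antipode k (u i 3)) ⊗ₜ[k]
        (u i 1 * HopfAlgebra.antipode k (u i 2)) =
      TensorProduct.map LinearMap.id (HopfAlgebra.antipode k) (Coalgebra.comul (R := k) h) ⊗ₜ[k]
        (1 : H) := by
  have hprod := convProd_apply hu
    ![convPostcomp H (includeLeft (R := k) (S := k) (A := H ⊗[k] H) (B := H))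
        (convPostcomp H includeLeft (convId k H)),
      convPostcomp H includeRight (convId k H),
      convPostcomp H includeRight (convAntipode k H),
      convPostcomp H includeLeft (convPostcomp H includeRight (convAntipode k H))]
  simp only [List.ofFn_succ, List.ofFn_zero, List.prod_cons, List.prod_nil, mul_one] at hprod
  have hcancel (F : WithConv (H →ₗ[k] (H ⊗[k] H) ⊗[k] H)) :
      convPostcomp H includeRight (convId k H) *
        (convPostcomp H includeRight (convAntipode k H) * F) = F := by
    rw [← mul_assoc, ← map_mul, convId_mul_convAntipode, map_one, one_mul]
  simpa [hcancel, ← map_mul, ← toConv_map_comp_comul] using hprod.symm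

lemma sum_algHom_mul_prod (i₀ : C →ₐ[k] B') (i₁ : C ⊗[k] C →ₐ[k] B') (i₂ : B →ₐ[k] B')
    {n : ℕ} {c : C} {u : ι → Fin (n + 4) → C} (hu : itComul k (n + 3) c = ∑ i, tp k (u i))
    (F : Fin (n + 1) → WithConv (C →ₗ[k] B)) :
    ∑ i, i₀ (u i 0) * i₁ (u i 1 ⊗ₜ u i 2) *
        i₂ (List.ofFn fun j => F j (u i j.succ.succ.succ)).prod =
      (convPostcomp C i₀ (convId k C) * convPostcomp C i₁ (toConv Coalgebra.comul) *
        convPostcomp C i₂ (List.ofFn F).prod) c := by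
  have hF := convProd_apply hu <|
    Fin.cons (convPostcomp C i₀ (convId k C)) <|
    Fin.cons (convPostcomp C (i₁.comp includeLeft) (convId k C)) <|
    Fin.cons (convPostcomp C (i₁.comp includeRight) (convId k C)) fun j => convPostcomp C i₂ (F j)
  rw [toConv_comul, map_mul, map_list_prod, List.map_ofFn]
  simp only [List.ofFn_cons, List.prod_cons, ← mul_assoc] at hF ⊢
  refine Eq.trans (Finset.sum_congr rfl fun i _ => ?_) hF.symm
  have htmul : u i 1 ⊗ₜ u i 2 =
      (includeLeft : C →ₐ[k] C ⊗[k] C) (u i 1) * includeRight (u i 2) := by simp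
  rw [map_list_prod, List.map_ofFn, htmul, map_mul, List.ofFn_succ (n := n + 3),
    List.ofFn_succ (n := n + 2), List.ofFn_succ (n := n + 1)]
  simp only [List.prod_cons, mul_assoc]
  rfl

lemma toConv_comp_convMul_apply (G : B' →ₗ[k] B) (D : WithConv (C →ₗ[k] B'))
    (P : WithConv (C →ₗ[k] B)) (c : C) :
    (toConv (G ∘ₗ D.ofConv) * P) c = LinearMap.mul' k B (TensorProduct.map G LinearMap.id
      ((toConv (TensorProduct.map D.ofConv P.ofConv ∘ₗ Coalgebra.comul) :
        WithConv (C →ₗ[k] B' ⊗[k] B)) c)) := by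
  simp [TensorProduct.map_map, LinearMap.convMul_apply]

lemma sum_head_mul_prod {n : ℕ} {c : C} {u : ι → Fin (n + 4) → C}
    (hu : itComul k (n + 3) c = ∑ i, tp k (u i)) (G : C ⊗[k] (C ⊗[k] C) →ₗ[k] B)
    (F : Fin (n + 1) → WithConv (C →ₗ[k] B)) :
    ∑ i, G (u i 0 ⊗ₜ (u i 1 ⊗ₜ u i 2)) * (List.ofFn fun j => F j (u i j.succ.succ.succ)).prod =
      (toConv (G ∘ₗ TensorProduct.map LinearMap.id Coalgebra.comul ∘ₗ Coalgebra.comul) *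
        (List.ofFn F).prod) c := by
  have hX := sum_algHom_mul_prod (B' := (C ⊗[k] (C ⊗[k] C)) ⊗[k] B)
      (includeLeft.comp includeLeft) (includeLeft.comp includeRight) includeRight hu F
  have hD := toConv_map_comp_comul (convId k C) (toConv Coalgebra.comul)
  refine Eq.trans ?_ (toConv_comp_convMul_apply G (toConv (TensorProduct.map _ _ ∘ₗ _)) _ c).symm
  rw [toConv_map_comp_comul, hD, map_mul]
  refine Eq.trans ?_ (congrArg (LinearMap.mul' k B ∘ₗ TensorProduct.map G LinearMap.id) hX)
  simp [-List.ofFn_succ]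

end HopfAlgebra

section WeakAction

lemma itComul_one (n : ℕ) : itComul k n (1 : H) = tp k fun _ => 1 := by
  induction n with
  | zero => rfl
  | succ n ih => simp [itComul_succ, tp_succ (n := n + 1), ih, Bialgebra.comul_one,
      Algebra.TensorProduct.one_def]

lemma SRep_one (n : ℕ) : SRep k n (1 : H) 1 fun _ _ => 1 := by
  simp [SRep, itComul_one]

namespace WeakAction

variable (W : WeakAction k A H)

/-- The weak action as the algebra map `a ↦ (h ↦ a^h)` into the convolution algebra. -/
def orbit : A →ₐ[k] WithConv (H →ₗ[k] A) where
  toFun a := toConv (W.act.flip a)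
  map_one' := conv_ext fun h => by simp [W.act_one, Algebra.algebraMap_eq_smul_one]
  map_mul' a b := conv_ext fun h => by
    obtain ⟨N, u, hu⟩ := exists_SRep (k := k) 1 h
    simp [convMul_apply hu, W.act_mul h a b N u hu]
  map_zero' := conv_ext fun h => by simp
  map_add' a b := conv_ext fun h => by simp
  commutes' r := conv_ext fun h => by simp [Algebra.algebraMap_eq_smul_one, W.act_one]

@[simp] lemma orbit_apply (a : A) (h : H) : W.orbit a h = W.act h a := rfl

/-- The twice iterated weak action as the algebra map `a ↦ (h ⊗ l ↦ (a^l)^h)`. -/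
def orbit₂ : A →ₐ[k] WithConv (H ⊗[k] H →ₗ[k] A) where
  toFun a := toConv (TensorProduct.lift (W.act.compl₂ (W.act.flip a)))
  map_one' := conv_tmul_ext fun h l => by
    simp [W.act_one, Algebra.algebraMap_eq_smul_one, smul_smul, mul_comm]
  map_mul' a b := conv_tmul_ext fun h l => by
    obtain ⟨N, u, hu⟩ := exists_SRep (k := k) 1 h
    obtain ⟨N', v, hv⟩ := exists_SRep (k := k) 1 l
    rw [convMul_apply (itComul_tmul_eq_sum hu hv)]
    simpa [W.act_mul l a b N' v hv, W.act_mul h _ _ N u hu, Fintype.sum_prod_type]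
      using Finset.sum_comm
  map_zero' := conv_tmul_ext fun h l => by simp
  map_add' a b := conv_tmul_ext fun h l => by simp
  commutes' r := conv_tmul_ext fun h l => by
    simp [W.act_one, Algebra.algebraMap_eq_smul_one, smul_smul, mul_comm, mul_left_comm]

@[simp] lemma orbit₂_tmul (a : A) (h l : H) : W.orbit₂ a (h ⊗ₜ l) = W.act h (W.act l a) := rfl

/-- The weak action of products as the algebra map `a ↦ (h ⊗ l ↦ a^{hl})`. -/
def orbitMul : A →ₐ[k] WithConv (H ⊗[k] H →ₗ[k] A) :=
  (convPrecomp (Bialgebra.mulCoalgHom k H)).comp W.orbit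

end WeakAction

/-- A bilinear map on `H` as an element of the convolution algebra of `H ⊗ H`. -/
def convLift (f : H →ₗ[k] H →ₗ[k] A) : WithConv (H ⊗[k] H →ₗ[k] A) :=
  toConv (TensorProduct.lift f)

@[simp] lemma convLift_tmul (f : H →ₗ[k] H →ₗ[k] A) (h l : H) : convLift f (h ⊗ₜ l) = f h l := rfl

lemma IsTwistedModule.orbit₂_mul {W : WeakAction k A H} {f : H →ₗ[k] H →ₗ[k] A}
    (hf : IsTwistedModule W f) (a : A) :
    W.orbit₂ a * convLift f = convLift f * W.orbitMul a :=
  conv_tmul_ext fun h l => by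
    obtain ⟨N, u, hu⟩ := exists_SRep (k := k) 1 h
    obtain ⟨N', v, hv⟩ := exists_SRep (k := k) 1 l
    simp only [convMul_apply (itComul_tmul_eq_sum hu hv), Fintype.sum_prod_type]
    exact hf h l a N N' u v hu hv

lemma IsConvInverse.convLift_mul {f g : H →ₗ[k] H →ₗ[k] A} (hfg : IsConvInverse f g) :
    convLift f * convLift g = 1 :=
  conv_tmul_ext fun h l => by
    obtain ⟨N, u, hu⟩ := exists_SRep (k := k) 1 h
    obtain ⟨N', v, hv⟩ := exists_SRep (k := k) 1 l
    simp only [convMul_apply (itComul_tmul_eq_sum hu hv), Fintype.sum_prod_type]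
    simpa [Algebra.algebraMap_eq_smul_one, mul_comm] using (hfg h l N N' u v hu hv).1

lemma IsConvInverse.symm {f g : H →ₗ[k] H →ₗ[k] A} (hfg : IsConvInverse f g) :
    IsConvInverse g f :=
  fun h l N N' u v hu hv => (hfg h l N N' u v hu hv).symm

end WeakAction

section CrossedProduct

namespace CrossedProduct

variable (S : CrossedProduct k A H E)

lemma aE_apply (a : A) : S.aE a = S.ι (a ⊗ₜ 1) := rfl

lemma hE_apply (h : H) : S.hE h = S.ι (1 ⊗ₜ h) := rfl

lemma aE_mul_hE (a : A) (h : H) : S.aE a * S.hE h = S.ι (a ⊗ₜ h) := by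
  obtain ⟨N, u, hu⟩ := exists_SRep (k := k) 1 h
  have hcounit := convMul_apply hu 1 (toConv (S.ι.toLinearMap ∘ₗ TensorProduct.mk k A H a))
  rw [one_mul] at hcounit
  rw [aE_apply, hE_apply, S.ι_mul a 1 1 h 1 N _ u (SRep_one 2) hu]
  simpa [S.one_act, (S.f_normal _).2, TensorProduct.smul_tmul, Algebra.algebraMap_eq_smul_one]
    using hcounit.symm

/-- The canonical map `a ↦ a # 1` as an algebra map. -/
def aEHom : A →ₐ[k] E :=
  AlgHom.ofLinearMap S.aE S.ι_one fun a b => by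
    rw [aE_apply S a, aE_apply S b, S.ι_mul a b 1 1 1 1 _ _ (SRep_one 2) (SRep_one 1)]
    simp [S.one_act, (S.f_normal 1).1, aE_apply]

lemma aEHom_apply (a : A) : S.aEHom a = S.ι (a ⊗ₜ 1) := rfl

lemma aEHom_mul_hE (a : A) (h : H) : S.aEHom a * S.hE h = S.ι (a ⊗ₜ h) := S.aE_mul_hE a h

/-- The canonical map `h ↦ 1 # h` as an element of the convolution algebra. -/
def hEConv : WithConv (H →ₗ[k] E) := toConv S.hE

@[simp] lemma hEConv_apply (h : H) : S.hEConv h = S.hE h := rfl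

lemma hE_one : S.hE 1 = 1 := S.ι_one

lemma hEConv_mul_convConst (a : A) :
    S.hEConv * convConst k H (S.aEHom a) = convPostcomp H S.aEHom (S.orbit a) * S.hEConv :=
  conv_ext fun h => by
    obtain ⟨N, u, hu⟩ := exists_SRep (k := k) 2 h
    rw [mul_convConst_apply, hEConv_apply, ← one_mul (S.hEConv), convMul_mul_apply hu, hE_apply,
      aEHom_apply, S.ι_mul 1 a h 1 N 1 u _ hu (SRep_one 1)]
    refine Finset.sum_congr rfl fun i _ => ?_
    simp [(S.f_normal _).1, ← aEHom_mul_hE, Algebra.algebraMap_eq_smul_one]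

/-- The map `h ⊗ l ↦ (1 # h)(1 # l)`. -/
def hEMul : WithConv (H ⊗[k] H →ₗ[k] E) :=
  toConv (LinearMap.mul' k E ∘ₗ TensorProduct.map S.hE S.hE)

@[simp] lemma hEMul_tmul (h l : H) : S.hEMul (h ⊗ₜ l) = S.hE h * S.hE l := rfl

/-- The map `h ⊗ l ↦ 1 # hl`. -/
def hEOfMul : WithConv (H ⊗[k] H →ₗ[k] E) := convPrecomp (Bialgebra.mulCoalgHom k H) S.hEConv

@[simp] lemma hEOfMul_tmul (h l : H) : S.hEOfMul (h ⊗ₜ l) = S.hE (h * l) := rfl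

lemma hEMul_eq : S.hEMul = convPostcomp _ S.aEHom (convLift S.f) * S.hEOfMul :=
  conv_tmul_ext fun h l => by
    obtain ⟨N, u, hu⟩ := exists_SRep (k := k) 1 h
    obtain ⟨N₂, u₂, hu₂⟩ := exists_SRep (k := k) 2 h
    obtain ⟨N', v, hv⟩ := exists_SRep (k := k) 1 l
    rw [convMul_apply (itComul_tmul_eq_sum hu hv), hEMul_tmul, hE_apply, hE_apply,
      S.ι_mul 1 1 h l N₂ N' u₂ v hu₂ hv, Fintype.sum_prod_type_right, Finset.sum_comm]
    refine Finset.sum_congr rfl fun j _ => ?_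
    let F : WithConv (H →ₗ[k] E) := toConv (S.aEHom.toLinearMap ∘ₗ S.f.flip (v j 0))
    let G : WithConv (H →ₗ[k] E) := toConv (S.hE ∘ₗ LinearMap.mulRight k (v j 1))
    have hFG : (1 * (F * G)) h = (F * G) h := by rw [one_mul]
    rw [convMul_mul_apply hu₂, convMul_apply hu] at hFG
    simpa [F, G, S.act_one, ← aEHom_mul_hE, Algebra.algebraMap_eq_smul_one] using hFG

lemma hEOfMul_mul_convConst (a : A) :
    S.hEOfMul * convConst k _ (S.aEHom a) =
      convPostcomp _ S.aEHom (S.orbitMul a) * S.hEOfMul := by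
  have h := congrArg (convPrecomp (Bialgebra.mulCoalgHom k H)) (S.hEConv_mul_convConst a)
  rwa [map_mul, map_mul, convPrecomp_convConst] at h

end CrossedProduct

end CrossedProduct

section Inverse

namespace CrossedProduct

variable (S : CrossedProduct k A H E) (g : H →ₗ[k] H →ₗ[k] A)

/-- The map `x ⊗ (y ⊗ z) ↦ g(S(y), z) # S(x)`, whose value on `h⁽¹⁾ ⊗ (h⁽²⁾ ⊗ h⁽³⁾)` is `(1 # h)⁻¹`
when `g` is the convolution inverse of the cocycle. -/
def hEInvKernel : H ⊗[k] (H ⊗[k] H) →ₗ[k] E :=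
  LinearMap.mul' k E ∘ₗ
    TensorProduct.map (S.aEHom.toLinearMap ∘ₗ TensorProduct.lift (g ∘ₗ HopfAlgebra.antipode k))
      (S.hE ∘ₗ HopfAlgebra.antipode k) ∘ₗ
    (TensorProduct.comm k H (H ⊗[k] H)).toLinearMap

@[simp] lemma hEInvKernel_tmul (x y z : H) :
    S.hEInvKernel g (x ⊗ₜ (y ⊗ₜ z)) =
      S.aEHom (g (HopfAlgebra.antipode k y) z) * S.hE (HopfAlgebra.antipode k x) := rfl

/-- The map `h ↦ g(S(h⁽²⁾), h⁽³⁾) # S(h⁽¹⁾)`. -/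
def hEInv : WithConv (H →ₗ[k] E) :=
  toConv (S.hEInvKernel g ∘ₗ TensorProduct.map LinearMap.id Coalgebra.comul ∘ₗ Coalgebra.comul)

variable {S g}

lemma convLift_mul_hEMul (hg : IsConvInverse S.f g) :
    convPostcomp _ S.aEHom (convLift g) * S.hEMul = S.hEOfMul := by
  rw [hEMul_eq, ← mul_assoc, ← map_mul, hg.symm.convLift_mul, map_one, one_mul]

variable (S) in
lemma hEOfMul_apply (x : H ⊗[k] H) : S.hEOfMul x = S.hE (LinearMap.mul' k H x) := rfl

variable (S) in
lemma hEOfMul_map_antipode_id_comul (h : H) :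
    S.hEOfMul (TensorProduct.map (HopfAlgebra.antipode k) LinearMap.id (Coalgebra.comul h)) =
      algebraMap k E (Coalgebra.counit h) := by
  rw [hEOfMul_apply, ← LinearMap.rTensor, HopfAlgebra.mul_antipode_rTensor_comul_apply]
  simp [Algebra.algebraMap_eq_smul_one, hE_one]

lemma hEInv_mul_hEConv (hg : IsConvInverse S.f g) : S.hEInv g * S.hEConv = 1 :=
  conv_ext fun h => by
    obtain ⟨N, u, hu⟩ := exists_SRep (k := k) 3 h
    have hsum := sum_head_mul_prod hu (S.hEInvKernel g) ![S.hEConv]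
    have hmul := congrArg (fun F => F (TensorProduct.map (HopfAlgebra.antipode k) LinearMap.id
      (Coalgebra.comul (R := k) h))) (convLift_mul_hEMul hg)
    simp only [LinearMap.convMul_apply _ _ (TensorProduct.map _ _ _),
      comul_map_antipode_id_comul hu, hEOfMul_map_antipode_id_comul, map_sum,
      TensorProduct.map_tmul, LinearMap.mul'_apply] at hmul
    simp only [List.ofFn_succ, List.ofFn_zero, List.prod_cons, List.prod_nil, mul_one] at hsum
    rw [LinearMap.convOne_apply, ← hmul]
    refine hsum.symm.trans (Finset.sum_congr rfl fun i _ => ?_)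
    simp [mul_assoc]

variable (S) in
/-- The map `h ↦ 1 # S(h)` as an element of the convolution algebra. -/
def hEAntipode : WithConv (H →ₗ[k] E) := toConv (S.hE ∘ₗ HopfAlgebra.antipode k)

variable (S) in
lemma hEConv_mul_hEAntipode_apply (h : H) :
    (S.hEConv * S.hEAntipode) h = S.aEHom (convLift S.f
      (TensorProduct.map LinearMap.id (HopfAlgebra.antipode k) (Coalgebra.comul h))) := by
  obtain ⟨N, u, hu⟩ := exists_SRep (k := k) 3 h
  let G := convPostcomp (H ⊗[k] H) S.aEHom (convLift S.f)
  let x : H ⊗[k] H := TensorProduct.map LinearMap.id (HopfAlgebra.antipode k) (Coalgebra.comul h)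
  have hmul : (S.hEConv * S.hEAntipode) h = S.hEMul x := by
    rw [LinearMap.convMul_apply]
    change _ = LinearMap.mul' k E (TensorProduct.map S.hE S.hE
      (TensorProduct.map LinearMap.id (HopfAlgebra.antipode k) (Coalgebra.comul h)))
    rw [← LinearMap.comp_apply (TensorProduct.map S.hE S.hE), ← TensorProduct.map_comp]
    rfl
  have hfactor := congrArg (LinearMap.mul' k E ∘ₗ
    TensorProduct.map G.ofConv (S.hE)) (sum_tmul_antipode_tmul_mul_antipode hu)
  rw [hmul, hEMul_eq, LinearMap.convMul_apply, comul_map_id_antipode_comul hu]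
  simp only [map_sum, LinearMap.comp_apply, TensorProduct.map_tmul, LinearMap.mul'_apply,
    hE_one, mul_one] at hfactor ⊢
  exact hfactor

variable (S g) in
lemma hEConv_mul_hEInv_apply_mem_range (h : H) :
    (S.hEConv * S.hEInv g) h ∈ LinearMap.range S.aEHom.toLinearMap := by
  let Λ : H →ₗ[k] A := TensorProduct.lift (g ∘ₗ HopfAlgebra.antipode k) ∘ₗ Coalgebra.comul
  let L : H ⊗[k] (H ⊗[k] H) →ₗ[k] E := LinearMap.mul' k E ∘ₗ TensorProduct.map S.hE
    (S.hEInvKernel g ∘ₗ TensorProduct.map LinearMap.id Coalgebra.comul)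
  have hmul : (S.hEConv * S.hEInv g) h =
      L (TensorProduct.map LinearMap.id Coalgebra.comul (Coalgebra.comul h)) := by
    rw [LinearMap.convMul_apply, LinearMap.comp_apply, TensorProduct.map_map]
    rfl
  have hL (z : H ⊗[k] H) : L (TensorProduct.assoc k H H H
      (TensorProduct.map Coalgebra.comul LinearMap.id z)) ∈
        LinearMap.range S.aEHom.toLinearMap := by
    induction z using TensorProduct.induction_on with
    | zero => simp
    | add z w hz hw => simpa using add_mem hz hw
    | tmul x y =>
      let r := Coalgebra.Repr.arbitrary k x
      have hL' : L (TensorProduct.assoc k H H H (Coalgebra.comul x ⊗ₜ y)) =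
          (S.hEConv * convConst k H (S.aEHom (Λ y)) * S.hEAntipode) x := by
        simp only [r.convMul_apply, mul_convConst_apply]
        simp only [← r.eq, TensorProduct.sum_tmul, map_sum, mul_assoc]
        rfl
      rw [TensorProduct.map_tmul, LinearMap.id_apply, hL', hEConv_mul_convConst, mul_assoc,
        r.convMul_apply]
      refine Submodule.sum_mem _ fun i _ => ?_
      rw [hEConv_mul_hEAntipode_apply, convPostcomp_apply, ← map_mul]
      exact LinearMap.mem_range_self S.aEHom.toLinearMap _
  rw [hmul]
  have := hL (Coalgebra.comul h)
  rwa [← LinearMap.rTensor, Coalgebra.coassoc_apply] at this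

variable (S) in
/-- The `A`-linear retraction `a # h ↦ ε(h) a` of `A → E`. -/
def retraction : E →ₗ[k] A :=
  TensorProduct.lift ((LinearMap.lsmul k A).flip.compl₂ Coalgebra.counit) ∘ₗ
    S.ι.symm.toLinearMap

variable (S) in
lemma retraction_aEHom_mul_hE (a : A) (h : H) :
    S.retraction (S.aEHom a * S.hE h) = Coalgebra.counit (R := k) h • a := by
  simp [retraction, aEHom_mul_hE]

variable (S) in
lemma retraction_aEHom (a : A) : S.retraction (S.aEHom a) = a := by
  simpa [hE_one] using S.retraction_aEHom_mul_hE a 1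

variable (S) in
lemma eq_one_of_convPostcomp_mul_hEConv {p : WithConv (H →ₗ[k] A)}
    (hp : convPostcomp H S.aEHom p * S.hEConv = S.hEConv) : p = 1 :=
  conv_ext fun h => by
    have hι := congrArg (fun F => S.retraction (F h)) hp
    let r := Coalgebra.Repr.arbitrary k h
    have hmul_one := r.convMul_apply p 1
    simp only [r.convMul_apply _ S.hEConv, map_sum, convPostcomp_apply, hEConv_apply,
      retraction_aEHom_mul_hE] at hι
    have hE := S.retraction_aEHom_mul_hE 1 h
    rw [map_one, one_mul] at hE
    rw [hE] at hι
    rw [← mul_one p, hmul_one, LinearMap.convOne_apply, Algebra.algebraMap_eq_smul_one, ← hι]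
    simp [Algebra.algebraMap_eq_smul_one]

lemma hEConv_mul_hEInv (hg : IsConvInverse S.f g) : S.hEConv * S.hEInv g = 1 := by
  let p : WithConv (H →ₗ[k] A) := toConv (S.retraction ∘ₗ (S.hEConv * S.hEInv g).ofConv)
  have hφ : convPostcomp H S.aEHom p = S.hEConv * S.hEInv g := conv_ext fun h => by
    obtain ⟨a, ha⟩ := S.hEConv_mul_hEInv_apply_mem_range g h
    change S.aEHom (S.retraction ((S.hEConv * S.hEInv g) h)) = _
    rw [← ha, AlgHom.toLinearMap_apply, retraction_aEHom]
  have hp : convPostcomp H S.aEHom p * S.hEConv = S.hEConv := by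
    rw [hφ, mul_assoc, hEInv_mul_hEConv hg, mul_one]
  rw [← hφ, S.eq_one_of_convPostcomp_mul_hEConv hp, map_one]

lemma hEInv_mul_orbit (hg : IsConvInverse S.f g) (a : A) :
    S.hEInv g * convPostcomp H S.aEHom (S.orbit a) = convConst k H (S.aEHom a) * S.hEInv g := by
  calc S.hEInv g * convPostcomp H S.aEHom (S.orbit a)
      = S.hEInv g * (convPostcomp H S.aEHom (S.orbit a) * S.hEConv) * S.hEInv g := by
        rw [mul_assoc, mul_assoc, hEConv_mul_hEInv hg, mul_one]
    _ = convConst k H (S.aEHom a) * S.hEInv g := by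
        rw [← hEConv_mul_convConst, ← mul_assoc, hEInv_mul_hEConv hg, one_mul]

variable (S g) in
/-- The map `h ⊗ l ↦ (1 # l)⁻¹(1 # h)⁻¹`. -/
def hEMulInv : WithConv (H ⊗[k] H →ₗ[k] E) :=
  toConv (LinearMap.mul' k E ∘ₗ TensorProduct.map (S.hEInv g).ofConv (S.hEInv g).ofConv ∘ₗ
    (TensorProduct.comm k H H).toLinearMap)

variable (S g) in
@[simp] lemma hEMulInv_tmul (h l : H) :
    S.hEMulInv g (h ⊗ₜ l) = S.hEInv g l * S.hEInv g h := rfl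

variable (S g) in
/-- The map `h ⊗ l ↦ (1 # hl)⁻¹`. -/
def hEOfMulInv : WithConv (H ⊗[k] H →ₗ[k] E) :=
  convPrecomp (Bialgebra.mulCoalgHom k H) (S.hEInv g)

lemma hEMulInv_mul_hEMul (hg : IsConvInverse S.f g) : S.hEMulInv g * S.hEMul = 1 :=
  conv_tmul_ext fun h l => by
    obtain ⟨N, u, hu⟩ := exists_SRep (k := k) 1 h
    obtain ⟨N', v, hv⟩ := exists_SRep (k := k) 1 l
    have hh := congrArg (fun F => F h) (hEInv_mul_hEConv hg)
    have hl := congrArg (fun F => F l) (hEInv_mul_hEConv hg)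
    simp only [convMul_apply hu, convMul_apply hv] at hh hl
    rw [convMul_apply (itComul_tmul_eq_sum hu hv), Fintype.sum_prod_type_right]
    calc ∑ j, ∑ i, S.hEMulInv g (u i 0 ⊗ₜ v j 0) * S.hEMul (u i 1 ⊗ₜ v j 1)
        = ∑ j, S.hEInv g (v j 0) * (∑ i, S.hEInv g (u i 0) * S.hEConv (u i 1)) *
            S.hEConv (v j 1) := by
          simp [Finset.mul_sum, Finset.sum_mul, mul_assoc]
      _ = (1 : WithConv (H ⊗[k] H →ₗ[k] E)) (h ⊗ₜ l) := by
          rw [hh]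
          simp only [hEConv_apply, LinearMap.convOne_apply, Algebra.algebraMap_eq_smul_one,
            mul_smul_comm, mul_one, smul_mul_assoc, ← Finset.smul_sum,
            TensorProduct.counit_tmul, smul_eq_mul] at hl ⊢
          rw [hl, smul_smul, mul_comm]

lemma hEOfMul_mul_hEOfMulInv (hg : IsConvInverse S.f g) :
    S.hEOfMul * S.hEOfMulInv g = 1 := by
  rw [hEOfMul, hEOfMulInv, ← map_mul, hEConv_mul_hEInv hg, map_one]

lemma hEMulInv_mul_cocycle (hg : IsConvInverse S.f g) :
    S.hEMulInv g * convPostcomp _ S.aEHom (convLift S.f) = S.hEOfMulInv g := by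
  calc S.hEMulInv g * convPostcomp _ S.aEHom (convLift S.f)
      = S.hEMulInv g * S.hEMul * S.hEOfMulInv g := by
        rw [hEMul_eq, mul_assoc, mul_assoc, hEOfMul_mul_hEOfMulInv hg, mul_one]
    _ = S.hEOfMulInv g := by rw [hEMulInv_mul_hEMul hg, one_mul]

lemma hEMulInv_mul_orbit₂ (hg : IsConvInverse S.f g) (a : A) :
    S.hEMulInv g * convPostcomp _ S.aEHom (S.orbit₂ a) =
      convConst k _ (S.aEHom a) * S.hEMulInv g :=
  conv_tmul_ext fun h l => by
    obtain ⟨N, u, hu⟩ := exists_SRep (k := k) 1 h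
    obtain ⟨N', v, hv⟩ := exists_SRep (k := k) 1 l
    have hh (b : A) := congrArg (fun F => F h) (hEInv_mul_orbit hg b)
    have hl := congrArg (fun F => F l) (hEInv_mul_orbit hg a)
    simp only [convConst_mul_apply] at hh hl
    simp only [convMul_apply hu, convMul_apply hv, convPostcomp_apply, S.orbit_apply] at hh hl
    rw [convConst_mul_apply, hEMulInv_tmul, ← mul_assoc, ← hl,
      convMul_apply (itComul_tmul_eq_sum hu hv), Fintype.sum_prod_type_right, Finset.sum_mul]
    refine Finset.sum_congr rfl fun j _ => ?_
    rw [mul_assoc, ← hh, Finset.mul_sum]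
    simp [mul_assoc]

end CrossedProduct

end Inverse

section MulAt

variable {X R : Type} [Mul X] [Mul R]

lemma mulAt_zero_zero {n : ℕ} (y : Fin (n + 2) → X) : mulAt y 0 0 = y 0 * y 1 := by simp [mulAt]

lemma mulAt_zero_succ {n : ℕ} (y : Fin (n + 2) → X) (j : Fin n) :
    mulAt y 0 j.succ = y j.succ.succ := by simp [mulAt]

lemma mulAt_succ_zero {n : ℕ} (y : Fin (n + 2) → X) (p : Fin n) : mulAt y p.succ 0 = y 0 := by
  simp [mulAt]

lemma mulAt_succ_succ {n : ℕ} (y : Fin (n + 2) → X) (p j : Fin n) :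
    mulAt y p.succ j.succ = mulAt (fun i => y i.succ) p j := by simp [mulAt]

lemma map_mulAt {F : Type} [FunLike F X R] [MulHomClass F X R] (σ : F) {n : ℕ}
    (y : Fin (n + 1) → X) (p j : Fin n) : σ (mulAt y p j) = mulAt (fun i => σ (y i)) p j := by
  unfold mulAt
  split_ifs <;> simp [map_mul]

end MulAt

section Words

variable {R : Type} [Ring R] (t : R)

/-- The word `t y₁ t y₂ t ⋯ t yₙ t`, standing for the bar chain `[y₁|⋯|yₙ]`. -/
def word : ∀ {n : ℕ}, (Fin n → R) → R
  | 0, _ => t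
  | _ + 1, y => t * y 0 * word fun i => y i.succ

/-- The alternating sum of the words obtained from `word t y` by deleting one of the letters `t`. -/
def wordBoundary : ∀ {n : ℕ}, (Fin n → R) → R
  | 0, _ => 1
  | _ + 1, y => y 0 * word t (fun i => y i.succ) - t * y 0 * wordBoundary fun i => y i.succ

lemma map_word {R' F : Type} [Ring R'] [FunLike F R R'] [MulHomClass F R R'] (φ : F) {n : ℕ}
    (y : Fin n → R) :
    φ (word t y) = word (φ t) fun i => φ (y i) := by
  induction n with
  | zero => rfl
  | succ n ih => simp only [word, map_mul, ih]

lemma word_mul_eq_prod {n : ℕ} (y : Fin n → R) (z : R) :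
    word t y * z =
      (List.ofFn (Fin.snoc (fun j => t * y j) (t * z) : Fin (n + 1) → R)).prod := by
  induction n with
  | zero => exact (List.prod_singleton (x := t * z)).symm
  | succ n ih =>
    have tail : (fun j : Fin (n + 1) =>
        (Fin.snoc (fun j => t * y j) (t * z) : Fin (n + 2) → R) j.succ) =
          Fin.snoc (fun j => t * y j.succ) (t * z) := by
      funext j
      cases j using Fin.lastCases with
      | last => rw [Fin.snoc_last, Fin.succ_last, Fin.snoc_last]
      | cast j => rw [Fin.snoc_castSucc, Fin.succ_castSucc, Fin.snoc_castSucc]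
    rw [List.ofFn_succ, List.prod_cons, tail, ← ih, word, mul_assoc]
    rfl

lemma wordBoundary_eq_sum {n : ℕ} (y : Fin (n + 1) → R) :
    wordBoundary t y = y 0 * word t (fun i => y i.succ)
      + (∑ p : Fin n, ((-1 : ℤ) ^ ((p : ℕ) + 1)) • word t (mulAt y p))
      + ((-1 : ℤ) ^ (n + 1)) • (word t (fun i => y i.castSucc) * y (Fin.last n)) := by
  induction n with
  | zero => simp [wordBoundary, word, sub_eq_add_neg]
  | succ n ih =>
    have first_face : word t (mulAt y 0) =
        t * (y 0 * y 1) * word t (fun i : Fin n => y i.succ.succ) := by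
      simp only [word, mulAt_zero_zero, mulAt_zero_succ]
    have inner_face (p : Fin n) : word t (mulAt y p.succ) =
        t * y 0 * word t (mulAt (fun i => y i.succ) p) := by
      simp only [word, mulAt_succ_zero, mulAt_succ_succ]
    have last_face : word t (fun i : Fin (n + 1) => y i.castSucc) =
        t * y 0 * word t (fun i : Fin n => y i.castSucc.succ) := rfl
    rw [wordBoundary, ih, Fin.sum_univ_succ, word]
    simp only [first_face, inner_face, last_face, Fin.val_zero, Fin.val_succ, pow_succ (-1 : ℤ),
      pow_zero, mul_neg, mul_one, neg_smul, one_smul, mul_add, Finset.mul_sum, mul_smul_comm,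
      Finset.sum_neg_distrib, neg_neg, Fin.succ_last, Fin.succ_zero_eq_one, ← mul_assoc]
    abel

variable {X : Type} (f : R) (σ ρ : X → R)

/-- The alternating sum of the words `t ρ(a₁) t ⋯ ρ(aⱼ) t f t σ(aⱼ₊₁) t ⋯ σ(aₙ) t`: the prism
between the words in the `ρ(aᵢ)` and in the `σ(aᵢ)`. -/
def prismWord : ∀ {n : ℕ}, (Fin n → X) → R
  | 0, _ => t * f * t
  | _ + 1, a => t * f * word t (fun i => σ (a i)) - t * ρ (a 0) * prismWord fun i => a i.succ

/-- The boundary of `prismWord`, obtained by applying `wordBoundary` to each of its words. -/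
def prismBoundary : ∀ {n : ℕ}, (Fin n → X) → R
  | 0, _ => f * t - t * f
  | _ + 1, a => f * word t (fun i => σ (a i)) - t * f * wordBoundary t (fun i => σ (a i))
      - (ρ (a 0) * prismWord t f σ ρ (fun i => a i.succ)
        - t * ρ (a 0) * prismBoundary fun i => a i.succ)

/-- The prism of the boundary of `a`, in recursive form; see `prismFaces_eq_sum`. -/
def prismFaces : ∀ {n : ℕ}, (Fin n → X) → R
  | 0, _ => 0
  | _ + 1, a => ρ (a 0) * prismWord t f σ ρ (fun i => a i.succ)
      - t * f * t * σ (a 0) * wordBoundary t (fun i => σ (a i.succ))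
      + t * ρ (a 0) * prismFaces fun i => a i.succ

variable {f σ ρ} in
lemma prismBoundary_add_prismFaces (h : ∀ a, ρ a * f = f * σ a) {n : ℕ} (a : Fin n → X) :
    prismBoundary t f σ ρ a + prismFaces t f σ ρ a =
      f * word t (fun i => σ (a i)) - word t (fun i => ρ (a i)) * f := by
  induction n with
  | zero => simp [prismBoundary, prismFaces, word]
  | succ n ih =>
    have tail : t * ρ (a 0) * prismBoundary t f σ ρ (fun i => a i.succ) =
        t * ρ (a 0) * (f * word t (fun i => σ (a i.succ)) - word t (fun i => ρ (a i.succ)) * f)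
          - t * ρ (a 0) * prismFaces t f σ ρ (fun i => a i.succ) := by
      rw [← mul_sub, ← ih, add_sub_cancel_right]
    have slide : t * ρ (a 0) * (f * word t (fun i => σ (a i.succ))) =
        t * f * σ (a 0) * word t (fun i => σ (a i.succ)) := by
      rw [← mul_assoc, mul_assoc t, h, ← mul_assoc]
    rw [prismBoundary, prismFaces, tail, mul_sub, slide, wordBoundary, word, word]
    simp only [mul_sub, ← mul_assoc]
    abel

end Words

section PrismFaces

variable {R X F : Type} [Ring R] [Mul X] [FunLike F X R] [MulHomClass F X R]
  (t f : R) (σ ρ : F)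

lemma prismFaces_eq_sum {n : ℕ} (a : Fin (n + 1) → X) :
    prismFaces t f σ ρ a = ρ (a 0) * prismWord t f σ ρ (fun i => a i.succ)
      + (∑ p : Fin n, ((-1 : ℤ) ^ ((p : ℕ) + 1)) • prismWord t f σ ρ (mulAt a p))
      + ((-1 : ℤ) ^ (n + 1)) •
          (prismWord t f σ ρ (fun i => a i.castSucc) * σ (a (Fin.last n))) := by
  induction n with
  | zero => simp [prismFaces, prismWord, wordBoundary, sub_eq_add_neg]
  | succ n ih =>
    have first_face : prismWord t f σ ρ (mulAt a 0) =
        t * f * t * σ (a 0) * (σ (a 1) * word t (fun i : Fin n => σ (a i.succ.succ)))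
          - t * ρ (a 0) * (ρ (a 1) * prismWord t f σ ρ (fun i : Fin n => a i.succ.succ)) := by
      simp only [prismWord, word, mulAt_zero_zero, mulAt_zero_succ, map_mul, mul_assoc]
    have inner_face (p : Fin n) : prismWord t f σ ρ (mulAt a p.succ) =
        t * f * t * σ (a 0) * word t (mulAt (fun i => σ (a i.succ)) p)
          - t * ρ (a 0) * prismWord t f σ ρ (mulAt (fun i => a i.succ) p) := by
      simp only [prismWord, word, mulAt_succ_zero, mulAt_succ_succ, map_mulAt, mul_assoc]
    have last_face : prismWord t f σ ρ (fun i : Fin (n + 1) => a i.castSucc) =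
        t * f * t * σ (a 0) * word t (fun i : Fin n => σ (a i.castSucc.succ))
          - t * ρ (a 0) * prismWord t f σ ρ (fun i : Fin n => a i.castSucc.succ) := by
      simp only [prismWord, word, mul_assoc]; rfl
    rw [prismFaces, ih, wordBoundary_eq_sum, Fin.sum_univ_succ]
    simp only [first_face, inner_face, last_face, Fin.val_zero, Fin.val_succ, pow_succ (-1 : ℤ),
      pow_zero, mul_neg, mul_one, neg_smul, one_smul, mul_add, Finset.mul_sum, mul_smul_comm,
      Finset.sum_neg_distrib, neg_neg, Fin.succ_last, Fin.succ_zero_eq_one, sub_mul,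
      smul_sub, Finset.sum_sub_distrib, ← mul_assoc]
    abel

end PrismFaces

section NormalizedPrism

variable {R : Type} [Ring R] [Algebra k R] {t : R}

variable (k t) in
/-- The right ideal `tR`, as a `k`-submodule. -/
abbrev wordIdeal : Submodule k R := LinearMap.range (LinearMap.mulLeft k t)

variable (k t) in
/-- The operator `x ↦ t r x` on `tR`. -/
def prefixOp : R →ₗ[k] wordIdeal k t →ₗ[k] wordIdeal k t where
  toFun r := (LinearMap.mulLeft k (t * r)).restrict fun x _ => ⟨r * x, (mul_assoc t r x).symm⟩
  map_add' r s := LinearMap.ext fun x => Subtype.ext <|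
    show t * (r + s) * x = t * r * x + t * s * x by rw [mul_add, add_mul]
  map_smul' c r := LinearMap.ext fun x => Subtype.ext <|
    show t * (c • r) * x = c • (t * r * x) by rw [mul_smul_comm, smul_mul_assoc]

lemma coe_prefixOp (r : R) (x : wordIdeal k t) : (prefixOp k t r x : R) = t * r * x := rfl

lemma prefixOp_one (ht : t * t = 0) : prefixOp k t 1 = 0 := by
  refine LinearMap.ext ?_
  rintro ⟨_, x, rfl⟩
  exact Subtype.ext (show t * 1 * (t * x) = 0 by rw [mul_one, ← mul_assoc, ht, zero_mul])

/-- The operator `x ↦ t σ(a) x` on `tR`, as a function of the class of `a` in `A/k`. -/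
def letterOp (ht : t * t = 0) (σ : A →ₐ[k] R) : Qbar k A →ₗ[k] wordIdeal k t →ₗ[k] wordIdeal k t :=
  Submodule.liftQ (M₂ := wordIdeal k t →ₗ[k] wordIdeal k t) (unitSub k A)
    (prefixOp k t ∘ₗ σ.toLinearMap) <| by
    rintro _ ⟨c, rfl⟩
    simp [Algebra.algebraMap_eq_smul_one, prefixOp_one ht]

/-- `word` on the normalized tensors. -/
def normalizedWord (ht : t * t = 0) (σ : A →ₐ[k] R) :
    ∀ n : ℕ, Tpow k (Qbar k A) n →ₗ[k] wordIdeal k t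
  | 0 => LinearMap.toSpanSingleton k _ ⟨t, 1, mul_one t⟩ ∘ₗ (tpowZeroEquiv k _).symm.toLinearMap
  | n + 1 => TensorProduct.lift ((LinearMap.lcomp k _ (normalizedWord ht σ n)) ∘ₗ letterOp ht σ) ∘ₗ
      (tpowConsEquiv k _ n).symm.toLinearMap

lemma coe_normalizedWord_tp (ht : t * t = 0) (σ : A →ₐ[k] R) {n : ℕ} (a : Fin n → A) :
    (normalizedWord ht σ n (tp k fun i => qbar k A (a i)) : R) = word t fun i => σ (a i) := by
  induction n with
  | zero => simp [normalizedWord, tp_zero, word]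
  | succ n ih =>
    rw [word, ← ih]
    simp [normalizedWord, tp_succ, letterOp, coe_prefixOp]

/-- `prismWord` on the normalized tensors. -/
def normalizedPrism (ht : t * t = 0) (f : R) (σ ρ : A →ₐ[k] R) :
    ∀ n : ℕ, Tpow k (Qbar k A) n →ₗ[k] wordIdeal k t
  | 0 => prefixOp k t f ∘ₗ normalizedWord ht σ 0
  | n + 1 => prefixOp k t f ∘ₗ normalizedWord ht σ (n + 1) -
      TensorProduct.lift ((LinearMap.lcomp k _ (normalizedPrism ht f σ ρ n)) ∘ₗ letterOp ht ρ) ∘ₗ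
        (tpowConsEquiv k _ n).symm.toLinearMap

lemma coe_normalizedPrism_tp (ht : t * t = 0) (f : R) (σ ρ : A →ₐ[k] R) {n : ℕ} (a : Fin n → A) :
    (normalizedPrism ht f σ ρ n (tp k fun i => qbar k A (a i)) : R) = prismWord t f σ ρ a := by
  induction n with
  | zero => rw [normalizedPrism, LinearMap.comp_apply, coe_prefixOp, coe_normalizedWord_tp]; rfl
  | succ n ih =>
    rw [normalizedPrism, prismWord, LinearMap.sub_apply, Submodule.coe_sub, LinearMap.comp_apply,
      coe_prefixOp, coe_normalizedWord_tp, ← ih]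
    simp [tp_succ, letterOp, coe_prefixOp]

end NormalizedPrism

section WordModel

/-- A ring in which bar chains `[a₁|⋯|aₙ]` become the words `t a₁ t ⋯ t aₙ t`, together with the
evaluations `m ⊗ b ↦ m b` into `M ⊗ Ā^n`. Letters of `E` at the two ends of a word are absorbed by
`M`, as if chains were written on a circle with `M` sitting between the last and the first `t`. -/
structure WordModel (Bi : Bimod k E M) (φ : A →ₐ[k] E) (B : Type) [Ring B] [Algebra k B] where
  letter : E →ₐ[k] B
  t : B
  t_mul_t : t * t = 0
  ev : ∀ n : ℕ, M →ₗ[k] B →ₗ[k] HCh k A M n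
  ev_word : ∀ {n : ℕ} (m : M) (a : Fin n → A), ev n m (word t fun j => letter (φ (a j))) =
    m ⊗ₜ[k] tp k fun j => qbar k A (a j)
  ev_letter_mul : ∀ (n : ℕ) (m : M) (e : E) (b : B), ev n m (letter e * b) = ev n (Bi.r e m) b
  ev_mul_letter : ∀ (n : ℕ) (m : M) (e : E) (b : B), ev n m (b * letter e) = ev n (Bi.l e m) b

variable (k A) in
/-- Sequences of normalized tensors, one of each degree. -/
abbrev BarSeq : Type := ∀ n : ℕ, Tpow k (Qbar k A) n

variable (k A) in
/-- The empty tensor `[]`, in degree zero. -/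
def barUnit : BarSeq k A
  | 0 => tp k Fin.elim0
  | _ + 1 => 0

variable (k A) in
/-- The map `v ⊗ [v₁|⋯|vₙ] ↦ [v|v₁|⋯|vₙ]`. -/
def barCons : Qbar k A ⊗[k] BarSeq k A →ₗ[k] BarSeq k A :=
  LinearMap.pi fun
    | 0 => 0
    | n + 1 => (tpowConsEquiv k _ n).toLinearMap ∘ₗ
        LinearMap.lTensor _ (LinearMap.proj (φ := fun n => Tpow k (Qbar k A) n) n)

variable (k A E M) in
/-- The module on which words act, from the right end of the word to its left end. An element of `M`
is a state in which no `t` has been read yet; afterwards the state `e ⊗ m ⊗ [a₁|⋯|aₙ]` stands for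
the word `e t a₁ t ⋯ t aₙ t`, with `m` waiting to be multiplied by `e` on the right. -/
abbrev WordState : Type := M × (E ⊗[k] (M ⊗[k] BarSeq k A))

/-- Reading a `t` moves the letter read before it, made into an element of `A` by `π`, into the
bar tensor. -/
def pushLetter (π : E →ₗ[k] A) : E ⊗[k] (M ⊗[k] BarSeq k A) →ₗ[k] M ⊗[k] BarSeq k A :=
  LinearMap.lTensor M (barCons k A) ∘ₗ (TensorProduct.leftComm k _ _ _).toLinearMap ∘ₗ
    LinearMap.rTensor _ (qbar k A ∘ₗ π)

variable (M) in
/-- The action of `t` on word states. -/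
def readT (π : E →ₗ[k] A) : Module.End k (WordState k A E M) :=
  LinearMap.inr k _ _ ∘ₗ TensorProduct.mk k E _ 1 ∘ₗ
    LinearMap.coprod ((TensorProduct.mk k M _).flip (barUnit k A)) (pushLetter π)

namespace Bimod

variable (A) in
/-- The action of a letter of `E` on word states. -/
def readLetter (Bi : Bimod k E M) : E →ₐ[k] Module.End k (WordState k A E M) :=
  (LinearMap.prodMapAlgHom k _ _).comp <|
    (AlgHom.ofLinearMap (B := Module.End k M) Bi.l Bi.l_one Bi.l_mul).prod
      ((Module.End.rTensorAlgHom k _ _).comp (Algebra.lmul k E))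

variable (A) in
/-- The right action of `E` on the coefficients in `M` of word states. -/
def coeffAct (Bi : Bimod k E M) (e : E) : Module.End k (WordState k A E M) :=
  LinearMap.prodMap (Bi.r e) (LinearMap.lTensor E (LinearMap.rTensor _ (Bi.r e)))

variable (A) in
/-- The operators on word states commuting with the right action on coefficients. -/
abbrev WordRing (Bi : Bimod k E M) : Subalgebra k (Module.End k (WordState k A E M)) :=
  Subalgebra.centralizer k (Set.range (Bi.coeffAct A))

instance (Bi : Bimod k E M) : Ring (Bi.WordRing A) :=
  Subalgebra.toRing (A := Module.End k (WordState k A E M)) _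

variable (Bi : Bimod k E M) (π : E →ₗ[k] A)

lemma coeffAct_inl (e : E) (m : M) :
    Bi.coeffAct A e (m, 0) = (Bi.r e m, 0) := by simp [coeffAct]

lemma readLetter_apply (e : E) (x : WordState k A E M) :
    Bi.readLetter A e x = (Bi.l e x.1, LinearMap.rTensor _ (LinearMap.mulLeft k e) x.2) := rfl

lemma readLetter_inl (e : E) (m : M) : Bi.readLetter A e (m, 0) = (Bi.l e m, 0) := by
  simp [readLetter_apply]

lemma readT_mem_wordRing : readT M π ∈ Bi.WordRing A := by
  rw [Subalgebra.mem_centralizer_iff]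
  rintro _ ⟨e, rfl⟩
  ext <;> simp [readT, coeffAct, pushLetter]

lemma readLetter_mem_wordRing (e : E) : Bi.readLetter A e ∈ Bi.WordRing A := by
  rw [Subalgebra.mem_centralizer_iff]
  rintro _ ⟨e', rfl⟩
  ext x
  · simpa [readLetter_apply, coeffAct] using LinearMap.congr_fun (Bi.lr_comm e e').symm x
  all_goals simp [readLetter_apply, coeffAct]

lemma coeffAct_apply_wordRing (b : Bi.WordRing A) (e : E) (x : WordState k A E M) :
    Bi.coeffAct A e (b.1 x) = b.1 (Bi.coeffAct A e x) :=
  LinearMap.congr_fun (Subalgebra.mem_centralizer_iff k |>.1 b.2 _ ⟨e, rfl⟩) x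

lemma readT_mul_readT (hπ : π 1 ∈ unitSub k A) : readT M π * readT M π = 0 := by
  have hq : qbar k A (π 1) = 0 := (Submodule.Quotient.mk_eq_zero _).2 hπ
  ext <;> simp [readT, pushLetter, hq]

variable (A) in
/-- The right action on `M ⊗ Ā^*` of the leftmost letter of a word. -/
def applyFirst : E ⊗[k] (M ⊗[k] BarSeq k A) →ₗ[k] M ⊗[k] BarSeq k A :=
  TensorProduct.lift (LinearMap.rTensorHom _ ∘ₗ Bi.r)

lemma applyFirst_rTensor_mulLeft (e : E) (x : E ⊗[k] (M ⊗[k] BarSeq k A)) :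
    Bi.applyFirst A (LinearMap.rTensor _ (LinearMap.mulLeft k e) x) =
      Bi.applyFirst A (LinearMap.lTensor E (LinearMap.rTensor _ (Bi.r e)) x) := by
  induction x using TensorProduct.induction_on with
  | zero => simp only [map_zero]
  | tmul e' y => simp [applyFirst, Bi.r_mul, LinearMap.rTensor_comp]
  | add x y hx hy => simp only [map_add, hx, hy]

variable (A) in
/-- The chain of degree `n` described by a word state. -/
def evalState (n : ℕ) : WordState k A E M →ₗ[k] HCh k A M n :=
  LinearMap.lTensor M (LinearMap.proj (φ := fun n => Tpow k (Qbar k A) n) n) ∘ₗ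
    Bi.applyFirst A ∘ₗ LinearMap.snd k _ _

lemma evalState_readLetter (n : ℕ) (e : E) (x : WordState k A E M) :
    Bi.evalState A n (Bi.readLetter A e x) = Bi.evalState A n (Bi.coeffAct A e x) :=
  congrArg (LinearMap.lTensor M _) (Bi.applyFirst_rTensor_mulLeft e x.2)

variable (A) in
/-- `m ⊗ b ↦ m b`, in degree `n`. -/
def wordEv (n : ℕ) : M →ₗ[k] Bi.WordRing A →ₗ[k] HCh k A M n :=
  (LinearMap.llcomp k _ _ _ (Bi.evalState A n)).comp <|
    LinearMap.flip <| LinearMap.lcomp k _ (LinearMap.inl k M _) ∘ₗ (Bi.WordRing A).val.toLinearMap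

/-- The symbol `t` of the word model. -/
def wordT : Bi.WordRing A := ⟨readT M π, Bi.readT_mem_wordRing π⟩

variable (A) in
/-- The letters of the word model. -/
def wordLetter : E →ₐ[k] Bi.WordRing A :=
  (Bi.readLetter A).codRestrict _ Bi.readLetter_mem_wordRing

lemma exists_word_wordT_wordLetter {φ : A →ₐ[k] E} (hπ : ∀ a, π (φ a) = a) (m : M) {n : ℕ}
    (a : Fin n → A) : ∃ w : BarSeq k A, w n = tp k (fun j => qbar k A (a j)) ∧
      (word (Bi.wordT π) fun j => Bi.wordLetter A (φ (a j))).1 (m, 0) = (0, 1 ⊗ₜ (m ⊗ₜ w)) := by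
  induction n with
  | zero => exact ⟨barUnit k A, congrArg (tp k) (Subsingleton.elim _ _),
      by simp [word, wordT, readT]⟩
  | succ n ih =>
    obtain ⟨w, hw, h⟩ := ih fun j => a j.succ
    refine ⟨barCons k A (qbar k A (a 0) ⊗ₜ w), ?_, ?_⟩
    · rw [tp_succ, ← hw]; rfl
    · have read_first : (word (Bi.wordT π) fun j => Bi.wordLetter A (φ (a j))).1 (m, 0) =
          readT M π (Bi.readLetter A (φ (a 0)) (0, 1 ⊗ₜ (m ⊗ₜ w))) := by rw [← h]; rfl
      rw [read_first, readLetter_apply]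
      simp [readT, pushLetter, hπ]

variable {π} in
/-- The word model of the operators on word states. -/
def wordModel {φ : A →ₐ[k] E} (hπ : ∀ a, π (φ a) = a) : WordModel Bi φ (Bi.WordRing A) where
  letter := Bi.wordLetter A
  t := Bi.wordT π
  t_mul_t := Subtype.ext (readT_mul_readT π ⟨1, by rw [← map_one φ, hπ]; simp⟩)
  ev := Bi.wordEv A
  ev_word {n} m a := by
    obtain ⟨w, hw, h⟩ := Bi.exists_word_wordT_wordLetter π hπ m a
    refine (congrArg (Bi.evalState A n) h).trans ?_
    simp [evalState, applyFirst, Bi.r_one, hw]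
  ev_letter_mul n m e b :=
    (Bi.evalState_readLetter n e _).trans <| congrArg (Bi.evalState A n) <|
      (Bi.coeffAct_apply_wordRing b e _).trans (congrArg b.1 (Bi.coeffAct_inl e m))
  ev_mul_letter n m e b :=
    congrArg (fun x => Bi.evalState A n (b.1 x)) (Bi.readLetter_inl e m)

end Bimod

end WordModel

section WordBoundary

variable {Bi : Bimod k E M} {φ : A →ₐ[k] E} {B : Type} [Ring B] [Algebra k B]

namespace WordModel

/-- The letters of `A`. -/
def baseLetter (W : WordModel Bi φ B) : A →ₐ[k] B := W.letter.comp φ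

variable (W : WordModel Bi φ B)

/-- The graph of the boundary on the span of the words with `n` letters of `A`. The boundary is kept
as a relation, because an element of `B` need not be a combination of words in only one way. -/
def wordPairs (n : ℕ) : Submodule k (B × B) :=
  Submodule.span k <| Set.range fun y : Fin n → A =>
    (word W.t fun i => W.baseLetter (y i), wordBoundary W.t fun i => W.baseLetter (y i))

lemma cons_mem_wordPairs {n : ℕ} {b b' : B} (h : (b, b') ∈ W.wordPairs n) (a : A) :
    (W.t * W.baseLetter a * b, W.baseLetter a * b - W.t * W.baseLetter a * b') ∈
      W.wordPairs (n + 1) := by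
  suffices W.wordPairs n ≤ (W.wordPairs (n + 1)).comap
      ((LinearMap.mulLeft k (W.t * W.baseLetter a) ∘ₗ LinearMap.fst k B B).prod
        (LinearMap.mulLeft k (W.baseLetter a) ∘ₗ LinearMap.fst k B B -
          LinearMap.mulLeft k (W.t * W.baseLetter a) ∘ₗ LinearMap.snd k B B)) from this h
  refine Submodule.span_le.2 ?_
  rintro _ ⟨y, rfl⟩
  exact Submodule.subset_span ⟨Fin.cons a y, rfl⟩

lemma bd_ev {bd : ∀ n, HCh k A M (n + 1) →ₗ[k] HCh k A M n}
    (hbd : IsHochschildD k (Bi.l ∘ₗ φ.toLinearMap) (Bi.r ∘ₗ φ.toLinearMap) bd) {n : ℕ} {b b' : B}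
    (h : (b, b') ∈ W.wordPairs (n + 1)) (m : M) :
    bd n (W.ev (n + 1) m b) = W.ev n m b' := by
  suffices W.wordPairs (n + 1) ≤ LinearMap.eqLocus
      (bd n ∘ₗ W.ev (n + 1) m ∘ₗ LinearMap.fst k B B) (W.ev n m ∘ₗ LinearMap.snd k B B) from this h
  refine Submodule.span_le.2 ?_
  rintro _ ⟨y, rfl⟩
  change bd n (W.ev (n + 1) m (word W.t fun i => W.letter (φ (y i)))) =
    W.ev n m (wordBoundary W.t fun i => W.baseLetter (y i))
  have inner_face (p : Fin n) : (mulAt (fun i => W.baseLetter (y i)) p) =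
      fun j => W.letter (φ (mulAt y p j)) :=
    funext fun j => (map_mulAt W.baseLetter y p j).symm
  simp only [W.ev_word, hbd n m y, wordBoundary_eq_sum, inner_face, map_add, map_sum, map_zsmul]
  simp only [baseLetter, AlgHom.comp_apply, W.ev_letter_mul, W.ev_mul_letter, W.ev_word,
    LinearMap.comp_apply, AlgHom.toLinearMap_apply]

variable {C : Type} [AddCommGroup C] [Module k C]

/-- `X'` is a boundary of `X`, pointwise in the sense of `wordPairs`. -/
def IsConvBoundary (n : ℕ) (X X' : WithConv (C →ₗ[k] B)) : Prop :=
  ∀ c, (X c, X' c) ∈ W.wordPairs n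

variable {W} in
lemma IsConvBoundary.sub {n : ℕ} {X X' Y Y' : WithConv (C →ₗ[k] B)}
    (hX : W.IsConvBoundary n X X') (hY : W.IsConvBoundary n Y Y') :
    W.IsConvBoundary n (X - Y) (X' - Y') := fun c =>
  (W.wordPairs n).sub_mem (hX c) (hY c)

variable [Coalgebra k C]

variable (C) in
/-- The letter `t`, as a constant of the convolution algebra. -/
abbrev convT : WithConv (C →ₗ[k] B) := convConst k C W.t

variable (C) in
/-- The inclusion of the letters of `A`, on convolution algebras. -/
abbrev convBaseLetter : WithConv (C →ₗ[k] A) →ₐ[k] WithConv (C →ₗ[k] B) :=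
  convPostcomp C W.baseLetter

variable (C) in
/-- The inclusion of the letters of `E`, on convolution algebras. -/
abbrev convLetter : WithConv (C →ₗ[k] E) →ₐ[k] WithConv (C →ₗ[k] B) := convPostcomp C W.letter

variable {W}

lemma IsConvBoundary.cons {n : ℕ} {X X' : WithConv (C →ₗ[k] B)} (h : W.IsConvBoundary n X X')
    (F : WithConv (C →ₗ[k] A)) :
    W.IsConvBoundary (n + 1) (W.convT C * W.convBaseLetter C F * X)
      (W.convBaseLetter C F * X - W.convT C * W.convBaseLetter C F * X') := by
  intro c
  have expand (Y : WithConv (C →ₗ[k] B)) := (Coalgebra.Repr.arbitrary k c).convMul_apply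
    (f := W.convBaseLetter C F) (g := Y)
  rw [conv_sub_apply, mul_assoc, mul_assoc, convConst_mul_apply, convConst_mul_apply,
    expand, expand, Finset.mul_sum, Finset.mul_sum, ← Finset.sum_sub_distrib, prod_mk_sum]
  refine Submodule.sum_mem _ fun i _ => ?_
  simpa only [mul_assoc, convPostcomp_apply] using W.cons_mem_wordPairs (h _) (F _)

lemma isConvBoundary_convT : W.IsConvBoundary 0 (W.convT C) 1 := fun c => by
  have h : (W.t, (1 : B)) ∈ W.wordPairs 0 := Submodule.subset_span ⟨Fin.elim0, rfl⟩
  rw [← map_one (convConst k C)]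
  exact (W.wordPairs 0).smul_mem (Coalgebra.counit (R := k) c) h

lemma isConvBoundary_word {n : ℕ} (F : Fin n → WithConv (C →ₗ[k] A)) :
    W.IsConvBoundary n (word (W.convT C) fun i => W.convBaseLetter C (F i))
      (wordBoundary (W.convT C) fun i => W.convBaseLetter C (F i)) := by
  induction n with
  | zero => exact isConvBoundary_convT
  | succ n ih => exact (ih fun i => F i.succ).cons (F 0)

lemma isConvBoundary_prism (f : WithConv (C →ₗ[k] A)) {Y : Type} (σ ρ : Y → WithConv (C →ₗ[k] A))
    {n : ℕ} (a : Fin n → Y) :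
    W.IsConvBoundary (n + 1)
      (prismWord (W.convT C) (W.convBaseLetter C f) (fun y => W.convBaseLetter C (σ y))
        (fun y => W.convBaseLetter C (ρ y)) a)
      (prismBoundary (W.convT C) (W.convBaseLetter C f) (fun y => W.convBaseLetter C (σ y))
        (fun y => W.convBaseLetter C (ρ y)) a) := by
  induction n with
  | zero => simpa [prismWord, prismBoundary] using isConvBoundary_convT.cons f
  | succ n ih =>
    exact ((isConvBoundary_word fun i => σ (a i)).cons f).sub
      ((ih fun i => a i.succ).cons (ρ (a 0)))

end WordModel

end WordBoundary

section Sandwich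

variable {Bi : Bimod k E M} {φ : A →ₐ[k] E} {B : Type} [Ring B] [Algebra k B]
  {C : Type} [AddCommGroup C] [Module k C] [Coalgebra k C]

lemma hch_hom_ext {V : Type} [AddCommGroup V] [Module k V] {n : ℕ} {f g : HCh k A M n →ₗ[k] V}
    (h : ∀ m (a : Fin n → A), f (m ⊗ₜ tp k fun j => qbar k A (a j)) =
      g (m ⊗ₜ tp k fun j => qbar k A (a j))) : f = g :=
  TensorProduct.ext <| LinearMap.ext fun m =>
    tpow_hom_ext (unitSub k A).mkQ_surjective (h m)

lemma prod_snoc_apply {n : ℕ} (t : B) (F : Fin n → WithConv (C →ₗ[k] B)) (Z : WithConv (C →ₗ[k] B))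
    (v : Fin (n + 1) → C) :
    (List.ofFn fun j => (Fin.snoc (fun j => convConst k C t * F j) (convConst k C t * Z) :
      Fin (n + 1) → WithConv (C →ₗ[k] B)) j (v j)).prod =
        word t (fun j => F j (v j.castSucc)) * Z (v (Fin.last n)) := by
  rw [word_mul_eq_prod]
  congr 2
  funext j
  cases j using Fin.lastCases with
  | last => simp only [Fin.snoc_last, convConst_mul_apply]
  | cast j => simp only [Fin.snoc_castSucc, convConst_mul_apply]

namespace WordModel

variable (W : WordModel Bi φ B)

/-- The chains `∑ (m G(c⁽¹⁾)) X(c⁽²⁾) Z(c⁽³⁾)`: an `m` conjugated by `G` and `Z`, with the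
convolution word `X` in between. -/
def sandwich (n : ℕ) (G Z : WithConv (C →ₗ[k] E)) (m : M) :
    WithConv (C →ₗ[k] B) →ₗ[k] C →ₗ[k] HCh k A M n where
  toFun X := W.ev n m ∘ₗ (W.convLetter C G * X * W.convLetter C Z).ofConv
  map_add' X Y := LinearMap.ext fun c => by simp [mul_add, add_mul]
  map_smul' r X := LinearMap.ext fun c => by simp

lemma sandwich_apply (n : ℕ) (G Z : WithConv (C →ₗ[k] E)) (m : M) (X : WithConv (C →ₗ[k] B))
    (c : C) : W.sandwich n G Z m X c = W.ev n m ((W.convLetter C G * X * W.convLetter C Z) c) := rfl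

lemma sandwich_convLetter_mul (n : ℕ) (G F Z : WithConv (C →ₗ[k] E)) (m : M)
    (X : WithConv (C →ₗ[k] B)) :
    W.sandwich n G Z m (W.convLetter C F * X) = W.sandwich n (G * F) Z m X :=
  LinearMap.ext fun c => by simp only [sandwich_apply, map_mul, mul_assoc]

lemma sandwich_mul_convLetter (n : ℕ) (G F Z : WithConv (C →ₗ[k] E)) (m : M)
    (X : WithConv (C →ₗ[k] B)) :
    W.sandwich n G Z m (X * W.convLetter C F) = W.sandwich n G (F * Z) m X :=
  LinearMap.ext fun c => by simp only [sandwich_apply, map_mul, mul_assoc]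

lemma sandwich_convConst_mul (n : ℕ) (G Z : WithConv (C →ₗ[k] E)) (m : M) (e : E)
    (X : WithConv (C →ₗ[k] B)) :
    W.sandwich n (convConst k C e * G) Z m X = W.sandwich n G Z (Bi.r e m) X :=
  LinearMap.ext fun c => by
    simp only [sandwich_apply, map_mul, convPostcomp_convConst, mul_assoc]
    rw [convConst_mul_apply, W.ev_letter_mul]

lemma sandwich_mul_convConst (n : ℕ) (G Z : WithConv (C →ₗ[k] E)) (m : M) (e : E)
    (X : WithConv (C →ₗ[k] B)) :
    W.sandwich n G (Z * convConst k C e) m X = W.sandwich n G Z (Bi.l e m) X :=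
  LinearMap.ext fun c => by
    simp only [sandwich_apply, map_mul, convPostcomp_convConst, ← mul_assoc]
    rw [mul_convConst_apply, W.ev_mul_letter]

lemma sandwich_convPrecomp {D : Type} [AddCommGroup D] [Module k D] [Coalgebra k D]
    (ψ : D →ₗc[k] C) (n : ℕ) (G Z : WithConv (C →ₗ[k] E)) (m : M) (X : WithConv (C →ₗ[k] B))
    (d : D) :
    W.sandwich n (convPrecomp ψ G) (convPrecomp ψ Z) m (convPrecomp ψ X) d =
      W.sandwich n G Z m X (ψ d) := by
  simp only [sandwich_apply, convLetter, convPostcomp_convPrecomp, ← map_mul, convPrecomp_apply]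

lemma bd_sandwich {bd : ∀ n, HCh k A M (n + 1) →ₗ[k] HCh k A M n}
    (hbd : IsHochschildD k (Bi.l ∘ₗ φ.toLinearMap) (Bi.r ∘ₗ φ.toLinearMap) bd) {n : ℕ}
    {X X' : WithConv (C →ₗ[k] B)} (h : W.IsConvBoundary (n + 1) X X')
    (G Z : WithConv (C →ₗ[k] E)) (m : M) (c : C) :
    bd n (W.sandwich (n + 1) G Z m X c) = W.sandwich n G Z m X' c := by
  obtain ⟨N, u, hu⟩ := exists_SRep (k := k) 2 c
  simp only [sandwich_apply, mul_assoc, convMul_mul_apply hu, map_sum, convPostcomp_apply,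
    W.ev_letter_mul, W.ev_mul_letter, W.bd_ev hbd (h _)]

/-- The convolution word `t α(a₁) t ⋯ t α(aₙ) t`. -/
abbrev convWord (α : A →ₐ[k] WithConv (C →ₗ[k] A)) {n : ℕ} (a : Fin n → A) :
    WithConv (C →ₗ[k] B) :=
  word (W.convT C) fun j => W.convBaseLetter C (α (a j))

lemma sandwich_convWord (α : A →ₐ[k] WithConv (C →ₗ[k] A)) {n : ℕ} {ι : Type} [Fintype ι] {c : C}
    {u : ι → Fin (n + 2) → C} (hu : itComul k (n + 1) c = ∑ i, tp k (u i))
    (G Z : WithConv (C →ₗ[k] E)) (m : M) (a : Fin n → A) :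
    W.sandwich n G Z m (W.convWord α a) c =
      ∑ i, Bi.l (Z (u i (Fin.last (n + 1)))) (Bi.r (G (u i 0)) m) ⊗ₜ[k]
        tp k fun j => qbar k A (α (a j) (u i j.succ.castSucc)) := by
  rw [sandwich_apply, mul_assoc, convWord, word_mul_eq_prod, ← List.prod_cons, ← List.ofFn_cons,
    convProd_apply hu, map_sum]
  refine Finset.sum_congr rfl fun i _ => ?_
  rw [List.ofFn_succ, List.prod_cons]
  simp only [Fin.cons_zero, Fin.cons_succ, prod_snoc_apply, convPostcomp_apply, baseLetter,
    AlgHom.comp_apply, W.ev_letter_mul, W.ev_mul_letter, W.ev_word]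
  rfl

lemma sandwich_kernel_convWord (α : A →ₐ[k] WithConv (H →ₗ[k] A)) {n : ℕ} {ι : Type} [Fintype ι]
    {h : H} {u : ι → Fin (n + 4) → H} (hu : itComul k (n + 3) h = ∑ i, tp k (u i))
    (κ : H ⊗[k] (H ⊗[k] H) →ₗ[k] E) (Z : WithConv (H →ₗ[k] E)) (m : M) (a : Fin n → A) :
    W.sandwich n
        (toConv (κ ∘ₗ TensorProduct.map LinearMap.id Coalgebra.comul ∘ₗ Coalgebra.comul)) Z m
        (W.convWord α a) h =
      ∑ i, Bi.l (Z (u i (Fin.last (n + 3)))) (Bi.r (κ (u i 0 ⊗ₜ (u i 1 ⊗ₜ u i 2))) m) ⊗ₜ[k]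
        tp k fun j => qbar k A (α (a j) (u i j.castSucc.succ.succ.succ)) := by
  have hκ : W.convLetter H
      (toConv (κ ∘ₗ TensorProduct.map LinearMap.id Coalgebra.comul ∘ₗ Coalgebra.comul)) =
        toConv ((W.letter.toLinearMap ∘ₗ κ) ∘ₗ
          TensorProduct.map LinearMap.id Coalgebra.comul ∘ₗ Coalgebra.comul) := rfl
  rw [sandwich_apply, mul_assoc, convWord, word_mul_eq_prod, hκ, ← sum_head_mul_prod hu]
  refine (map_sum (W.ev n m) _ _).trans ?_
  refine Finset.sum_congr rfl fun i _ => ?_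
  simp only [prod_snoc_apply, convPostcomp_apply, baseLetter, LinearMap.comp_apply,
    AlgHom.toLinearMap_apply, AlgHom.comp_apply, W.ev_letter_mul, W.ev_mul_letter, W.ev_word]
  rfl

variable {W} {bd : ∀ n, HCh k A M (n + 1) →ₗ[k] HCh k A M n}

lemma bd_sandwich_convWord
    (hbd : IsHochschildD k (Bi.l ∘ₗ φ.toLinearMap) (Bi.r ∘ₗ φ.toLinearMap) bd)
    {α : A →ₐ[k] WithConv (C →ₗ[k] A)} {G Z : WithConv (C →ₗ[k] E)}
    (hG : ∀ a, G * convPostcomp C φ (α a) = convConst k C (φ a) * G)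
    (hZ : ∀ a, Z * convConst k C (φ a) = convPostcomp C φ (α a) * Z)
    {n : ℕ} (m : M) (a : Fin (n + 1) → A) (c : C) :
    bd n (W.sandwich (n + 1) G Z m (W.convWord α a) c) =
      W.sandwich n G Z (Bi.r (φ (a 0)) m) (W.convWord α fun i => a i.succ) c
      + (∑ p : Fin n,
          ((-1 : ℤ) ^ ((p : ℕ) + 1)) • W.sandwich n G Z m (W.convWord α (mulAt a p)) c)
      + ((-1 : ℤ) ^ (n + 1)) •
          W.sandwich n G Z (Bi.l (φ (a (Fin.last n))) m)
            (W.convWord α fun i => a i.castSucc) c := by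
  have inner_face (p : Fin n) : mulAt (fun j => W.convBaseLetter C (α (a j))) p =
      fun j => W.convBaseLetter C (α (mulAt a p j)) :=
    funext fun j => (map_mulAt ((W.convBaseLetter C).comp α) a p j).symm
  rw [W.bd_sandwich hbd (isConvBoundary_word fun j => α (a j)), wordBoundary_eq_sum]
  rw [← sandwich_convConst_mul, ← sandwich_mul_convConst, ← hG, hZ, ← sandwich_convLetter_mul,
    ← sandwich_mul_convLetter]
  simp only [inner_face, map_add, map_sum, map_zsmul, LinearMap.add_apply, LinearMap.sum_apply,
    LinearMap.smul_apply]
  rfl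

end WordModel

end Sandwich

section PrismChain

variable {Bi : Bimod k E M} {φ : A →ₐ[k] E} {B : Type} [Ring B] [Algebra k B]
  {C : Type} [AddCommGroup C] [Module k C] [Coalgebra k C]

namespace WordModel

variable (W : WordModel Bi φ B) (f : WithConv (C →ₗ[k] A)) (σ ρ : A →ₐ[k] WithConv (C →ₗ[k] A))
  (G Z : WithConv (C →ₗ[k] E))

lemma convT_mul_convT : W.convT C * W.convT C = 0 := by rw [← map_mul, W.t_mul_t, map_zero]

/-- The prism between the convolution words `convWord ρ a` and `convWord σ a`. -/
abbrev convPrism {n : ℕ} (a : Fin n → A) : WithConv (C →ₗ[k] B) :=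
  prismWord (W.convT C) (W.convBaseLetter C f) ((W.convBaseLetter C).comp σ)
    ((W.convBaseLetter C).comp ρ) a

/-- The map `m ⊗ [a₁|⋯|aₙ] ↦ ∑ (m G(c⁽¹⁾)) P(c⁽²⁾) Z(c⁽³⁾)`, where `P` is the prism of `a`. -/
def prismChain (n : ℕ) (c : C) : HCh k A M n →ₗ[k] HCh k A M (n + 1) :=
  TensorProduct.lift <| LinearMap.mk₂ k
    (fun m x => W.sandwich (n + 1) G Z m
      (normalizedPrism W.convT_mul_convT (W.convBaseLetter C f) ((W.convBaseLetter C).comp σ)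
        ((W.convBaseLetter C).comp ρ) n x) c)
    (fun m m' x => by simp [sandwich_apply])
    (fun r m x => by simp [sandwich_apply])
    (fun m x x' => by simp)
    (fun r m x => by simp)

lemma prismChain_tmul {n : ℕ} (c : C) (m : M) (a : Fin n → A) :
    W.prismChain f σ ρ G Z n c (m ⊗ₜ tp k fun j => qbar k A (a j)) =
      W.sandwich (n + 1) G Z m (W.convPrism f σ ρ a) c := by
  rw [convPrism, ← coe_normalizedPrism_tp W.convT_mul_convT]
  rfl

variable {W f σ ρ G Z} {bd : ∀ n, HCh k A M (n + 1) →ₗ[k] HCh k A M n}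

lemma sandwich_prismBoundary_add_prismFaces (hf : ∀ a, ρ a * f = f * σ a) {n : ℕ} (c : C) (m : M)
    (a : Fin n → A) :
    W.sandwich n G Z m (prismBoundary (W.convT C) (W.convBaseLetter C f)
        ((W.convBaseLetter C).comp σ) ((W.convBaseLetter C).comp ρ) a) c +
      W.sandwich n G Z m (prismFaces (W.convT C) (W.convBaseLetter C f)
        ((W.convBaseLetter C).comp σ) ((W.convBaseLetter C).comp ρ) a) c =
    W.sandwich n (G * convPostcomp C φ f) Z m (W.convWord σ a) c -
      W.sandwich n G (convPostcomp C φ f * Z) m (W.convWord ρ a) c := by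
  have hf' (a : A) : (W.convBaseLetter C).comp ρ a * W.convBaseLetter C f =
      W.convBaseLetter C f * (W.convBaseLetter C).comp σ a := by
    simp only [AlgHom.comp_apply, ← map_mul, hf]
  rw [← LinearMap.add_apply, ← map_add, prismBoundary_add_prismFaces _ hf', map_sub,
    ← sandwich_convLetter_mul, ← sandwich_mul_convLetter]
  rfl

variable (hbd : IsHochschildD k (Bi.l ∘ₗ φ.toLinearMap) (Bi.r ∘ₗ φ.toLinearMap) bd)

include hbd

lemma bd_prismChain {n : ℕ} (c : C) (m : M) (a : Fin n → A) :
    bd n (W.prismChain f σ ρ G Z n c (m ⊗ₜ tp k fun j => qbar k A (a j))) =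
      W.sandwich n G Z m (prismBoundary (W.convT C) (W.convBaseLetter C f)
        ((W.convBaseLetter C).comp σ) ((W.convBaseLetter C).comp ρ) a) c := by
  rw [prismChain_tmul]
  exact W.bd_sandwich hbd (isConvBoundary_prism f σ ρ a) G Z m c

lemma prismChain_bd (hG : ∀ a, G * convPostcomp C φ (ρ a) = convConst k C (φ a) * G)
    (hZ : ∀ a, Z * convConst k C (φ a) = convPostcomp C φ (σ a) * Z) {n : ℕ} (c : C) (m : M)
    (a : Fin (n + 1) → A) :
    W.prismChain f σ ρ G Z n c (bd n (m ⊗ₜ tp k fun j => qbar k A (a j))) =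
      W.sandwich (n + 1) G Z m (prismFaces (W.convT C) (W.convBaseLetter C f)
        ((W.convBaseLetter C).comp σ) ((W.convBaseLetter C).comp ρ) a) c := by
  simp only [hbd n m a, map_add, map_sum, map_zsmul, prismChain_tmul, LinearMap.comp_apply,
    AlgHom.toLinearMap_apply]
  rw [← sandwich_convConst_mul, ← sandwich_mul_convConst, ← hG, hZ, ← sandwich_convLetter_mul,
    ← sandwich_mul_convLetter, prismFaces_eq_sum]
  simp only [map_add, map_sum, map_zsmul, LinearMap.add_apply, LinearMap.sum_apply,
    LinearMap.smul_apply]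
  rfl

theorem bd_prismChain_add_prismChain_bd (hf : ∀ a, ρ a * f = f * σ a)
    (hG : ∀ a, G * convPostcomp C φ (ρ a) = convConst k C (φ a) * G)
    (hZ : ∀ a, Z * convConst k C (φ a) = convPostcomp C φ (σ a) * Z) {n : ℕ} (c : C) (m : M)
    (a : Fin (n + 1) → A) :
    bd (n + 1) (W.prismChain f σ ρ G Z (n + 1) c (m ⊗ₜ tp k fun j => qbar k A (a j))) +
      W.prismChain f σ ρ G Z n c (bd n (m ⊗ₜ tp k fun j => qbar k A (a j))) =
    W.sandwich (n + 1) (G * convPostcomp C φ f) Z m (W.convWord σ a) c -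
      W.sandwich (n + 1) G (convPostcomp C φ f * Z) m (W.convWord ρ a) c := by
  rw [bd_prismChain hbd, prismChain_bd hbd hG hZ, sandwich_prismBoundary_add_prismFaces hf]

theorem bd_prismChain_zero (hf : ∀ a, ρ a * f = f * σ a) (c : C) (m : M) (a : Fin 0 → A) :
    bd 0 (W.prismChain f σ ρ G Z 0 c (m ⊗ₜ tp k fun j => qbar k A (a j))) =
    W.sandwich 0 (G * convPostcomp C φ f) Z m (W.convWord σ a) c -
      W.sandwich 0 G (convPostcomp C φ f * Z) m (W.convWord ρ a) c := by
  rw [bd_prismChain hbd, ← sandwich_prismBoundary_add_prismFaces hf, prismFaces, map_zero,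
    LinearMap.zero_apply, add_zero]

end WordModel

end PrismChain

section Theta

variable {S : CrossedProduct k A H E} {Bi : Bimod k E M} {finv : H →ₗ[k] H →ₗ[k] A}
  {θ : H → ∀ r : ℕ, HCh k A M r →ₗ[k] HCh k A M r}

lemma IsConvInverse.apply_one_one (hfinv : IsConvInverse S.f finv) : finv 1 1 = 1 := by
  simpa [(S.f_normal 1).1] using (hfinv 1 1 1 1 _ _ (SRep_one 1) (SRep_one 1)).1

/-- The homotopy between `θ^{hl}` and `θ^h ∘ θ^l`. -/
def WordModel.mulHomotopy {B : Type} [Ring B] [Algebra k B] (W : WordModel Bi S.aEHom B)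
    (finv : H →ₗ[k] H →ₗ[k] A) (h l : H) (n : ℕ) :
    HCh k A M n →ₗ[k] HCh k A M (n + 1) :=
  W.prismChain (convLift S.f) S.orbitMul S.orbit₂ (S.hEMulInv finv) S.hEOfMul n (h ⊗ₜ l)

namespace IsTheta

lemma apply_one (hθ : IsTheta S Bi finv θ) (hfinv : IsConvInverse S.f finv) (n : ℕ) :
    θ 1 n = LinearMap.id :=
  hch_hom_ext fun m a => by
    rw [hθ 1 n m a 1 _ (SRep_one _)]
    simp [hfinv.apply_one_one, S.one_act, S.hE_one, S.ι_one, Bi.l_one, Bi.r_one]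

variable {B : Type} [Ring B] [Algebra k B] (W : WordModel Bi S.aEHom B)
  {bd : ∀ n, HCh k A M (n + 1) →ₗ[k] HCh k A M n}

include W

lemma eq_sandwich (hθ : IsTheta S Bi finv θ) {n : ℕ} (h : H) (m : M) (a : Fin n → A) :
    θ h n (m ⊗ₜ tp k fun j => qbar k A (a j)) =
      W.sandwich n (S.hEInv finv) S.hEConv m (W.convWord S.orbit a) h := by
  obtain ⟨N, u, hu⟩ := exists_SRep (k := k) (n + 3) h
  rw [hθ h n m a N u hu, CrossedProduct.hEInv, W.sandwich_kernel_convWord _ hu]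
  simp only [CrossedProduct.hEInvKernel_tmul, S.aEHom_mul_hE]
  rfl

lemma apply_add (hθ : IsTheta S Bi finv θ) (h l : H) (n : ℕ) : θ (h + l) n = θ h n + θ l n :=
  hch_hom_ext fun m a => by simp only [hθ.eq_sandwich W, map_add, LinearMap.add_apply]

lemma mul_eq_sandwich (hθ : IsTheta S Bi finv θ) {n : ℕ} (h l : H) (m : M) (a : Fin n → A) :
    θ (h * l) n (m ⊗ₜ tp k fun j => qbar k A (a j)) =
      W.sandwich n (S.hEOfMulInv finv) S.hEOfMul m (W.convWord S.orbitMul a) (h ⊗ₜ l) := by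
  have hword : W.convWord S.orbitMul a =
      convPrecomp (Bialgebra.mulCoalgHom k H) (W.convWord S.orbit a) := by
    refine Eq.trans ?_ (map_word _ (convPrecomp (Bialgebra.mulCoalgHom k H)) _).symm
    exact congrArg (fun t => word t _) (convPrecomp_convConst _ W.t).symm
  rw [hword, CrossedProduct.hEOfMulInv, CrossedProduct.hEOfMul, W.sandwich_convPrecomp,
    hθ.eq_sandwich W]
  rfl

lemma comp_eq_sandwich (hθ : IsTheta S Bi finv θ) {n : ℕ} (h l : H) (m : M) (a : Fin n → A) :
    θ h n (θ l n (m ⊗ₜ tp k fun j => qbar k A (a j))) =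
      W.sandwich n (S.hEMulInv finv) S.hEMul m (W.convWord S.orbit₂ a) (h ⊗ₜ l) := by
  obtain ⟨N, u, hu⟩ := exists_SRep (k := k) (n + 1) h
  obtain ⟨N', v, hv⟩ := exists_SRep (k := k) (n + 1) l
  rw [hθ.eq_sandwich W l, W.sandwich_convWord _ hv, map_sum,
    W.sandwich_convWord _ (itComul_tmul_eq_sum hu hv), Fintype.sum_prod_type_right]
  refine Finset.sum_congr rfl fun j _ => ?_
  have swap (x y : E) (m : M) : Bi.r x (Bi.l y m) = Bi.l y (Bi.r x m) :=
    (LinearMap.congr_fun (Bi.lr_comm y x) m).symm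
  rw [hθ.eq_sandwich W h, W.sandwich_convWord _ hu]
  simp only [CrossedProduct.hEMulInv_tmul, CrossedProduct.hEMul_tmul, Bi.r_mul, Bi.l_mul, swap,
    LinearMap.comp_apply]
  rfl

variable (hθ : IsTheta S Bi finv θ) (hfinv : IsConvInverse S.f finv)
  (hbd : IsHochschildD k (Bi.l ∘ₗ S.aEHom.toLinearMap) (Bi.r ∘ₗ S.aEHom.toLinearMap) bd)

include hθ hfinv hbd

theorem bd_comp (h : H) (n : ℕ) : bd n ∘ₗ θ h (n + 1) = θ h n ∘ₗ bd n :=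
  hch_hom_ext fun m a => by
    simp only [LinearMap.comp_apply, hθ.eq_sandwich W, hbd n m a, map_add, map_sum, map_zsmul]
    exact WordModel.bd_sandwich_convWord hbd (CrossedProduct.hEInv_mul_orbit hfinv)
      S.hEConv_mul_convConst m a h

theorem bd_mulHomotopy_add_mulHomotopy_bd (h l : H) (n : ℕ) :
    bd (n + 1) ∘ₗ W.mulHomotopy finv h l (n + 1) + W.mulHomotopy finv h l n ∘ₗ bd n =
      θ (h * l) (n + 1) - θ h (n + 1) ∘ₗ θ l (n + 1) :=
  hch_hom_ext fun m a => by
    refine (WordModel.bd_prismChain_add_prismChain_bd hbd S.f_twisted.orbit₂_mul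
      (CrossedProduct.hEMulInv_mul_orbit₂ hfinv) S.hEOfMul_mul_convConst _ m a).trans ?_
    rw [CrossedProduct.hEMulInv_mul_cocycle hfinv, ← CrossedProduct.hEMul_eq,
      ← hθ.mul_eq_sandwich W, ← hθ.comp_eq_sandwich W]
    rfl

theorem bd_mulHomotopy_zero (h l : H) :
    bd 0 ∘ₗ W.mulHomotopy finv h l 0 = θ (h * l) 0 - θ h 0 ∘ₗ θ l 0 :=
  hch_hom_ext fun m a => by
    refine (WordModel.bd_prismChain_zero hbd S.f_twisted.orbit₂_mul _ m a).trans ?_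
    rw [CrossedProduct.hEMulInv_mul_cocycle hfinv, ← CrossedProduct.hEMul_eq,
      ← hθ.mul_eq_sandwich W, ← hθ.comp_eq_sandwich W]
    rfl

lemma comp_sub_mul_mem_range_zero (h l : H) (x : HCh k A M 0) :
    θ h 0 (θ l 0 x) - θ (h * l) 0 x ∈ LinearMap.range (bd 0) := by
  have homotopy := LinearMap.congr_fun (hθ.bd_mulHomotopy_zero W hfinv hbd h l) x
  exact ⟨-W.mulHomotopy finv h l 0 x, by
    rw [map_neg, ← neg_sub (θ (h * l) 0 x)]; exact congrArg Neg.neg homotopy⟩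

lemma comp_sub_mul_mem_range (h l : H) (n : ℕ) (x : HCh k A M (n + 1)) (hx : bd n x = 0) :
    θ h (n + 1) (θ l (n + 1) x) - θ (h * l) (n + 1) x ∈ LinearMap.range (bd (n + 1)) := by
  have homotopy :=
    LinearMap.congr_fun (hθ.bd_mulHomotopy_add_mulHomotopy_bd W hfinv hbd h l n) x
  simp only [LinearMap.add_apply, LinearMap.comp_apply, LinearMap.sub_apply, hx, map_zero,
    add_zero] at homotopy
  exact ⟨-W.mulHomotopy finv h l (n + 1) x, by rw [map_neg, homotopy, neg_sub]⟩

end IsTheta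

end Theta

section Homology

universe u v w

variable {k : Type u} {H : Type v} [CommRing k] [Ring H]

lemma exists_module_quotient {X : Type w} [AddCommGroup X] [Module k X] (R : Submodule k X)
    (T : H → X →ₗ[k] X) (hR : ∀ h, R ≤ R.comap (T h)) (hone : T 1 = LinearMap.id)
    (hmul : ∀ h l x, T h (T l x) - T (h * l) x ∈ R) (hadd : ∀ h l, T (h + l) = T h + T l) :
    ∃ inst : Module H (X ⧸ R), ∀ (h : H) (x : X),
      (letI := inst; h • (Submodule.Quotient.mk x : X ⧸ R) = Submodule.Quotient.mk (T h x)) := by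
  let F : H →+* Module.End k (X ⧸ R) := RingHom.mk'
    { toFun := fun h => R.mapQ R (T h) (hR h)
      map_one' := Submodule.linearMap_qext _ (by ext x; simp [hone])
      map_mul' := fun h l => Submodule.linearMap_qext _ <| LinearMap.ext fun x =>
        ((Submodule.Quotient.eq R).2 (hmul h l x)).symm }
    fun h l => Submodule.linearMap_qext _ (by ext x; simp [hadd])
  exact ⟨Module.compHom _ F, fun _ _ => rfl⟩

lemma exists_module_homology {X Y Z : Type w} [AddCommGroup X] [Module k X] [AddCommGroup Y]
    [Module k Y] [AddCommGroup Z] [Module k Z] {d' : X →ₗ[k] Y} {d : Y →ₗ[k] Z}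
    {T' : H → X →ₗ[k] X} {T : H → Y →ₗ[k] Y} {T'' : H → Z →ₗ[k] Z}
    (hd' : ∀ h, d' ∘ₗ T' h = T h ∘ₗ d') (hd : ∀ h, d ∘ₗ T h = T'' h ∘ₗ d)
    (hone : T 1 = LinearMap.id)
    (hmul : ∀ h l x, d x = 0 → T h (T l x) - T (h * l) x ∈ LinearMap.range d')
    (hadd : ∀ h l, T (h + l) = T h + T l) :
    ∃ inst : Module H (LinearMap.ker d ⧸ (LinearMap.range d').comap (LinearMap.ker d).subtype),
      ∀ (h : H) (x : Y) (hx : x ∈ LinearMap.ker d) (hTx : T h x ∈ LinearMap.ker d),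
        (letI := inst;
          h • (Submodule.Quotient.mk ⟨x, hx⟩ : LinearMap.ker d ⧸
              (LinearMap.range d').comap (LinearMap.ker d).subtype) =
            Submodule.Quotient.mk ⟨T h x, hTx⟩) := by
  have hker (h : H) : ∀ x ∈ LinearMap.ker d, T h x ∈ LinearMap.ker d := fun x hx => by
    rw [LinearMap.mem_ker] at hx ⊢
    rw [← LinearMap.comp_apply, hd, LinearMap.comp_apply, hx, map_zero]
  obtain ⟨inst, hinst⟩ := exists_module_quotient
    ((LinearMap.range d').comap (LinearMap.ker d).subtype) (fun h => (T h).restrict (hker h))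
    (fun h x ⟨y, hy⟩ => ⟨T' h y, (LinearMap.congr_fun (hd' h) y).trans (congrArg (T h) hy)⟩)
    (by ext x; simp [hone]) (fun h l x => hmul h l x x.2) (fun h l => by ext x; simp [hadd])
  exact ⟨inst, fun h x hx _ => hinst h ⟨x, hx⟩⟩

end Homology

/-- **The `H`-module structure on Hochschild homology `H_*(A, M)`.**
Let `E = A #_f H` be a crossed product with convolution invertible cocycle, and let `M` be
an `E`-bimodule, regarded as an `A`-bimodule via `a ↦ a # 1`.  The maps
`θ^h_r(m ⊗ 𝐚) = (1 # h⁽³⁾) m (1 # h⁽¹⁾)⁻¹ ⊗ 𝐚^{h⁽²⁾}` form an endomorphism of the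
normalized Hochschild chain complex `(M ⊗ Ā^*, b_*)`.  On Hochschild homology, the
endomorphisms induced by `θ^h ∘ θ^l` and by `θ^{hl}` coincide, and `θ^1` induces the
identity; consequently `H_*(A, M)` carries a left `H`-module structure with
`h • [x] = [θ^h x]`. -/
theorem hochschild_homology_H_module
    (S : CrossedProduct k A H E) (Bi : Bimod k E M)
    (finv : H →ₗ[k] H →ₗ[k] A) (hfinv : IsConvInverse S.f finv)
    (bd : ∀ n : ℕ, HCh k A M (n + 1) →ₗ[k] HCh k A M n)
    (hbd : IsHochschildD k (Bi.l ∘ₗ S.aE) (Bi.r ∘ₗ S.aE) bd)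
    (θ : H → ∀ r : ℕ, HCh k A M r →ₗ[k] HCh k A M r) (hθ : IsTheta S Bi finv θ) :
    -- `θ^h` is an endomorphism of the normalized Hochschild chain complex
    (∀ (h : H) (r : ℕ), bd r ∘ₗ θ h (r + 1) = θ h r ∘ₗ bd r) ∧
    -- `θ^h ∘ θ^l` and `θ^{hl}` induce the same endomorphism of homology
    (∀ (h l : H) (x : HCh k A M 0),
        θ h 0 (θ l 0 x) - θ (h * l) 0 x ∈ LinearMap.range (bd 0)) ∧
    (∀ (h l : H) (n : ℕ) (x : HCh k A M (n + 1)), bd n x = 0 →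
        θ h (n + 1) (θ l (n + 1) x) - θ (h * l) (n + 1) x ∈ LinearMap.range (bd (n + 1))) ∧
    -- `θ^1` induces the identity on homology
    (∀ x : HCh k A M 0, θ 1 0 x - x ∈ LinearMap.range (bd 0)) ∧
    (∀ (n : ℕ) (x : HCh k A M (n + 1)), bd n x = 0 →
        θ 1 (n + 1) x - x ∈ LinearMap.range (bd (n + 1))) ∧
    -- consequently, `H_*(A, M)` is a left `H`-module via `h • [x] = [θ^h x]`
    (∃ inst0 : Module H (HCh k A M 0 ⧸ LinearMap.range (bd 0)),
      ∀ (h : H) (x : HCh k A M 0),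
        (letI := inst0;
          h • (Submodule.Quotient.mk x : HCh k A M 0 ⧸ LinearMap.range (bd 0)) =
            Submodule.Quotient.mk (θ h 0 x))) ∧
    (∀ n : ℕ, ∃ instn : Module H (LinearMap.ker (bd n) ⧸
        (LinearMap.range (bd (n + 1))).comap (LinearMap.ker (bd n)).subtype),
      ∀ (h : H) (x : HCh k A M (n + 1)) (hx : x ∈ LinearMap.ker (bd n))
        (hθx : θ h (n + 1) x ∈ LinearMap.ker (bd n)),
        (letI := instn;
          h • (Submodule.Quotient.mk ⟨x, hx⟩ : LinearMap.ker (bd n) ⧸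
              (LinearMap.range (bd (n + 1))).comap (LinearMap.ker (bd n)).subtype) =
            Submodule.Quotient.mk ⟨θ h (n + 1) x, hθx⟩)) := by
  have W := Bi.wordModel S.retraction_aEHom
  have chain := hθ.bd_comp W hfinv hbd
  have mul_zero := hθ.comp_sub_mul_mem_range_zero W hfinv hbd
  have mul_succ := hθ.comp_sub_mul_mem_range W hfinv hbd
  have one_sub_mem (n : ℕ) (x : HCh k A M n) (R : Submodule k (HCh k A M n)) :
      θ 1 n x - x ∈ R := by
    rw [hθ.apply_one hfinv, LinearMap.id_apply, sub_self]; exact R.zero_mem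
  refine ⟨chain, mul_zero, mul_succ, fun x => one_sub_mem 0 x _, fun n x _ => one_sub_mem _ x _,
    exists_module_quotient _ (fun h => θ h 0) ?_ (hθ.apply_one hfinv 0) mul_zero
      (fun h l => hθ.apply_add W h l 0),
    fun n => exists_module_homology (fun h => chain h (n + 1)) (fun h => chain h n)
      (hθ.apply_one hfinv (n + 1)) (fun h l => mul_succ h l n)
      (fun h l => hθ.apply_add W h l (n + 1))⟩
  rintro h _ ⟨y, rfl⟩
  exact ⟨θ h 1 y, LinearMap.congr_fun (chain h 0) y⟩

end Statement10

end HopfCrossed
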